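/- There is a positive constant c > 0 such that for every ε > 0 the following holds. Let n be sufficiently large with respect to ε, let L = ⌊(log n)/10⌋, and let X and Y be disjoint subsets of {1,…,n} with |X| = L and |Y| = 3L. Then with probability at least 1 − (1/4)·n^{-c} there is a set B with |B| = n − L and {1,…,n} \ Y ⊆ B ⊆ {1,…,n} such that the submatrix M_n[{1,…,n} \ X, B] is n^{(1−ε)n/2}-heavy. -/

import Mathlib

/-!
Reveal the indices one at a time: when the index `x` is revealed, row and column `x` of the
symmetric matrix receive fresh random signs, and all entries among earlier indices stay fixed. In
each phase a potential of the best available minor is a supermartingale, up to a factor and an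
additive error. Split the index set as `X ⊔ W ⊔ F₁ ⊔ F₂ ⊔ F₃ ⊔ Y`, where `W`, `F₂`, `F₃` have
sizes equal to small multiples of `n`, and reveal the blocks in this order.

*Growth.* Follow the sum of the squares of all permanents with row set `A` and columns among the
revealed indices. Adding a row replaces the vector of these permanents by a Rademacher sum of
vectors, many of which have comparable norms. By a small-ball estimate in Hilbert space the sum of
squares is thereby multiplied by a constant multiple of `n`, outside an event of arbitrarily small
constant probability. Hence all but a small proportion of `F₁` can be used as rows, and pigeonhole
over the at most `2 ^ n` column sets gives one minor whose permanent is at least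
`n ^ ((1 - ε) n / 2) * 2 ^ n`. From then on this single minor `(A, B)` is extended, and its
permanent may lose a factor `2` for each revealed index.

*Columns.* Along `F₂` the columns that are neither in `X` nor in `A` are turned into rows. The
permanent with a new row and column is a quadratic form in the new signs, and it is at least as
large as any one of its off-diagonal coefficients with probability at least `1/4`. In the end
`B ⊆ A ∪ X`, and exactly `|X|` elements of `A ∪ X` are free to become columns.

*Rows.* A new row can be completed by one of the `|X|` free columns, except with probability
`2 ^ (-|X|)`, and with probability about `1/2` an older missing row is absorbed too, in the new
column. So after `F₃` the number of missing rows has a bounded exponential moment.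

*Last rows.* The same moves along the `3 |X|` rows of `Y` finish the row set and bring the free
columns into `Y`, since each new row uses up a prescribed free column outside `Y` with probability
at least `1/2`. The failure probability is `O((125/144) ^ |X|)`, a negative power of `n`.
-/

open Finset

/-- The real number (`1` or `-1`) associated to a Boolean: a Rademacher value. -/
noncomputable def rad (b : Bool) : ℝ := if b then 1 else -1

/-- The permanent of a square real matrix. -/
noncomputable def perm {n : ℕ} (M : Matrix (Fin n) (Fin n) ℝ) : ℝ :=
  ∑ σ : Equiv.Perm (Fin n), ∏ i, M i (σ i)

/-- The permanent of the submatrix of `M` with row set `A` and column set `B`,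
defined as a sum over all bijections between `A` and `B` (it equals `0` if
`A.card ≠ B.card`). Since the permanent is invariant under row and column
permutations, this faithfully represents `per M[A,B]`. -/
noncomputable def permOn {m n : ℕ} (M : Matrix (Fin m) (Fin n) ℝ)
    (A : Finset (Fin m)) (B : Finset (Fin n)) : ℝ :=
  ∑ σ : {x // x ∈ A} ≃ {y // y ∈ B}, ∏ i : {x // x ∈ A}, M i.1 (σ i).1

/-- The symmetric `n × n` sign matrix determined by Boolean data `ω` (the entries on and
above the diagonal are `rad (ω i j)` for `i ≤ j`; below-diagonal entries are given by
symmetry). As `ω` ranges uniformly over all Boolean data, this is exactly the random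
symmetric matrix `M_n` with i.i.d. Rademacher entries on and above the diagonal. -/
noncomputable def symMat (n : ℕ) (ω : Fin n → Fin n → Bool) : Matrix (Fin n) (Fin n) ℝ :=
  fun i j => if i ≤ j then rad (ω i j) else rad (ω j i)

open Classical in
/-- The probability of the event `P` for the random symmetric Rademacher matrix `M_n`. -/
noncomputable def prob (n : ℕ) (P : Matrix (Fin n) (Fin n) ℝ → Prop) : ℝ :=
  ((univ.filter fun ω : Fin n → Fin n → Bool => P (symMat n ω)).card : ℝ) / 2 ^ (n * n)

open scoped BigOperators

/-! ### Permanents of submatrices -/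

section permOn
variable {m n : ℕ} (M : Matrix (Fin m) (Fin n) ℝ)

lemma permOn_eq_sum_equiv (A : Finset (Fin m)) {B : Finset (Fin n)} {β : Type*} [Fintype β]
    [DecidableEq β] (e : β ≃ {y // y ∈ B}) :
    permOn M A B = ∑ σ : {x // x ∈ A} ≃ β, ∏ i, M i.1 (e (σ i)).1 :=
  (Fintype.sum_equiv (Equiv.equivCongr (Equiv.refl _) e) _ _ fun _ => rfl).symm

lemma permOn_eq_zero {A : Finset (Fin m)} {B : Finset (Fin n)} (h : A.card ≠ B.card) :
    permOn M A B = 0 := by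
  have : IsEmpty ({x // x ∈ A} ≃ {y // y ∈ B}) := ⟨fun e => h (card_eq_of_equiv e)⟩
  exact Fintype.sum_empty _

lemma permOn_empty : permOn M ∅ ∅ = 1 := by
  have : Unique ({x // x ∈ (∅ : Finset (Fin m))} ≃ {y // y ∈ (∅ : Finset (Fin n))}) :=
    uniqueOfSubsingleton (Equiv.equivOfIsEmpty _ _)
  rw [permOn, Fintype.sum_unique]
  rfl

lemma permOn_insert_row {A : Finset (Fin m)} (B : Finset (Fin n)) {x : Fin m} (hx : x ∉ A) :
    permOn M (insert x A) B = ∑ b ∈ B, M x b * permOn M A (B.erase b) := by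
  let e : {z // z ∈ insert x A} ≃ Option {z // z ∈ A} := subtypeInsertEquivOption hx
  have expand : permOn M (insert x A) B = ∑ σ : Option {z // z ∈ A} ≃ {y // y ∈ B},
      M x (σ none).1 * ∏ i : {z // z ∈ A}, M i.1 (σ (some i)).1 := by
    refine (Fintype.sum_equiv (Equiv.equivCongr e.symm (Equiv.refl _)) _ _ fun σ => ?_).symm
    rw [← Equiv.prod_comp e.symm, Fintype.prod_option]
    simp only [Equiv.equivCongr_apply_apply, Equiv.symm_symm, Equiv.apply_symm_apply,
      Equiv.refl_apply]
    rfl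
  rw [expand, ← sum_coe_sort B,
    ← Fintype.sum_fiberwise fun σ : Option {z // z ∈ A} ≃ {y // y ∈ B} => σ none]
  refine Fintype.sum_congr _ _ fun b => ?_
  let e' : {y : {y // y ∈ B} // y ≠ b} ≃ {y // y ∈ B.erase b.1} :=
    { toFun y := ⟨y.1.1, mem_erase.2 ⟨fun h => y.2 (Subtype.ext h), y.1.2⟩⟩
      invFun y := ⟨⟨y.1, mem_of_mem_erase y.2⟩,
        fun h => ne_of_mem_erase y.2 (congrArg Subtype.val h)⟩ }
  rw [permOn_eq_sum_equiv M A e', mul_sum]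
  refine Fintype.sum_equiv (Equiv.optionSubtype b) _ _ ?_
  rintro ⟨σ, rfl⟩
  rfl

lemma permOn_transpose (A : Finset (Fin m)) (B : Finset (Fin n)) :
    permOn M.transpose B A = permOn M A B := by
  refine Fintype.sum_equiv ⟨Equiv.symm, Equiv.symm, fun _ => rfl, fun _ => rfl⟩ _ _ fun σ => ?_
  rw [← Equiv.prod_comp σ.symm]
  simp

lemma permOn_insert_col (A : Finset (Fin m)) {B : Finset (Fin n)} {x : Fin n} (hx : x ∉ B) :
    permOn M A (insert x B) = ∑ a ∈ A, M a x * permOn M (A.erase a) B := by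
  simp only [← permOn_transpose M, permOn_insert_row _ _ hx, Matrix.transpose_apply]

lemma permOn_congr {M N : Matrix (Fin m) (Fin n) ℝ} {A : Finset (Fin m)} {B : Finset (Fin n)}
    (h : ∀ i ∈ A, ∀ j ∈ B, M i j = N i j) : permOn M A B = permOn N A B :=
  sum_congr rfl fun σ _ => prod_congr rfl fun i _ => h _ i.2 _ (σ i).2

end permOn

/-- The matrix obtained from `M` by writing the vector `v` into row `x` and into column `x`; this is
what revealing the index `x` does to a symmetric matrix. -/
def setRowCol {ι R : Type*} [DecidableEq ι] (M : Matrix ι ι R) (x : ι) (v : ι → R) : Matrix ι ι R :=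
  fun i j => if i = x then v j else if j = x then v i else M i j

section setRowCol
variable {n : ℕ} (M : Matrix (Fin n) (Fin n) ℝ) {x : Fin n} (v : Fin n → ℝ) {A B : Finset (Fin n)}

lemma permOn_setRowCol (hA : x ∉ A) (hB : x ∉ B) : permOn (setRowCol M x v) A B = permOn M A B :=
  permOn_congr fun _ hi _ hj => by
    rw [setRowCol, if_neg (ne_of_mem_of_not_mem hi hA), if_neg (ne_of_mem_of_not_mem hj hB)]

lemma permOn_setRowCol_insert_row (hA : x ∉ A) (hB : x ∉ B) :
    permOn (setRowCol M x v) (insert x A) B = ∑ b ∈ B, v b * permOn M A (B.erase b) := by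
  rw [permOn_insert_row _ _ hA]
  refine sum_congr rfl fun b _ => ?_
  rw [permOn_setRowCol M v hA (notMem_mono (erase_subset b B) hB), setRowCol, if_pos rfl]

lemma permOn_setRowCol_insert_both (hA : x ∉ A) (hB : x ∉ B) :
    permOn (setRowCol M x v) (insert x A) (insert x B) = v x * permOn M A B +
      ∑ q ∈ B, ∑ p ∈ A, v q * v p * permOn M (A.erase p) (B.erase q) := by
  rw [permOn_insert_row _ _ hA, sum_insert hB, erase_insert hB, permOn_setRowCol M v hA hB,
    setRowCol, if_pos rfl]
  congr 1
  refine sum_congr rfl fun q hq => ?_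
  have hxB : x ∉ B.erase q := notMem_mono (erase_subset q B) hB
  rw [erase_insert_of_ne (ne_of_mem_of_not_mem hq hB).symm, permOn_insert_col _ _ hxB, mul_sum]
  refine sum_congr rfl fun p hp => ?_
  rw [permOn_setRowCol M v (notMem_mono (erase_subset p A) hA) hxB]
  simp [setRowCol, ne_of_mem_of_not_mem hp hA, mul_assoc]

end setRowCol

/-! ### Averages over sign patterns -/

open Classical in
/-- The `0`/`1`-valued indicator of a proposition, so that `𝔼 ω, ind (p ω)` is the probability of
`p`. -/
noncomputable def ind (p : Prop) : ℝ := if p then 1 else 0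

section ind
variable {p q r : Prop}

lemma ind_of_true (h : p) : ind p = 1 := if_pos h

lemma ind_of_false (h : ¬p) : ind p = 0 := if_neg h

lemma ind_nonneg (p : Prop) : 0 ≤ ind p := by
  unfold ind
  split_ifs <;> norm_num

lemma ind_le {c : ℝ} (hc : 0 ≤ c) (h : p → 1 ≤ c) : ind p ≤ c := by
  unfold ind
  split_ifs with hp
  exacts [h hp, hc]

lemma ind_le_one (p : Prop) : ind p ≤ 1 := ind_le zero_le_one fun _ => le_rfl

lemma ind_mono (h : p → q) : ind p ≤ ind q :=
  ind_le (ind_nonneg q) fun hp => (ind_of_true (h hp)).ge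

lemma ind_le_add (h : p → q ∨ r) : ind p ≤ ind q + ind r := by
  refine ind_le (add_nonneg (ind_nonneg q) (ind_nonneg r)) fun hp => ?_
  rcases h hp with hq | hr
  · linarith [ind_of_true hq, ind_nonneg r]
  · linarith [ind_of_true hr, ind_nonneg q]

lemma ind_not (p : Prop) : ind (¬p) = 1 - ind p := by
  by_cases hp : p <;> simp [ind, hp]

end ind

lemma rad_not (b : Bool) : rad (!b) = -rad b := by cases b <;> simp [rad]

lemma abs_rad (b : Bool) : |rad b| = 1 := by cases b <;> simp [rad]

section signPatterns
variable {ι : Type*} [DecidableEq ι]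

/-- The sign pattern `ξ` with the signs at the positions in `F` reversed. -/
def flipOn (F : Finset ι) (ξ : ι → Bool) : ι → Bool := fun j => if j ∈ F then !ξ j else ξ j

lemma flipOn_flipOn (F G : Finset ι) (ξ : ι → Bool) :
    flipOn F (flipOn G ξ) = flipOn (symmDiff F G) ξ := by
  funext j
  by_cases hF : j ∈ F <;> by_cases hG : j ∈ G <;> simp [flipOn, mem_symmDiff, hF, hG]

lemma flipOn_involutive (F : Finset ι) : Function.Involutive (flipOn F) := fun ξ => by
  rw [flipOn_flipOn, symmDiff_self]
  rfl

lemma rad_flipOn_of_mem {F : Finset ι} {j : ι} (h : j ∈ F) (ξ : ι → Bool) :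
    rad (flipOn F ξ j) = -rad (ξ j) := by rw [flipOn, if_pos h, rad_not]

lemma flipOn_of_notMem {F : Finset ι} {j : ι} (h : j ∉ F) (ξ : ι → Bool) :
    flipOn F ξ j = ξ j := if_neg h

variable [Fintype ι]

lemma expect_flipOn (F : Finset ι) (f : (ι → Bool) → ℝ) : 𝔼 ξ, f (flipOn F ξ) = 𝔼 ξ, f ξ :=
  Fintype.expect_equiv (flipOn_involutive F).toPerm _ _ fun _ => rfl

lemma expect_piecewise (J : Finset ι) (f : (ι → Bool) → ℝ) :
    𝔼 ζ, 𝔼 ξ, f (J.piecewise ξ ζ) = 𝔼 ξ, f ξ := by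
  let swap (p : (ι → Bool) × (ι → Bool)) := (J.piecewise p.1 p.2, J.piecewise p.2 p.1)
  have swap_involutive : Function.Involutive swap := fun p => by
    ext j <;> by_cases hj : j ∈ J <;> simp [swap, hj]
  have h : 𝔼 p, f (swap p).1 = 𝔼 p : (ι → Bool) × (ι → Bool), f p.1 :=
    Fintype.expect_equiv swap_involutive.toPerm _ _ fun _ => rfl
  rw [← univ_product_univ, expect_product, expect_product, expect_comm] at h
  simpa only [Fintype.expect_const] using h

/-- If every flip of some positions of `D` leads out of `bad`, then the `2 ^ |D|` translates of
`bad` by such flips are pairwise disjoint. -/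
lemma expect_ind_le_of_flipOn (D : Finset ι) (bad : (ι → Bool) → Prop)
    (h : ∀ ξ, bad ξ → ∀ F ⊆ D, F.Nonempty → ¬bad (flipOn F ξ)) :
    𝔼 ξ, ind (bad ξ) ≤ (1 / 2) ^ D.card := by
  have disjoint_translates : ∀ ξ, ∑ F ∈ D.powerset, ind (bad (flipOn F ξ)) ≤ 1 := fun ξ => by
    by_cases hex : ∃ F ∈ D.powerset, bad (flipOn F ξ)
    · obtain ⟨F, hF, hb⟩ := hex
      refine (sum_eq_single_of_mem F hF fun G hG hne => ind_of_false fun hbG => ?_).trans_le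
        (ind_le_one _)
      refine h _ hb (symmDiff G F) ?_ (nonempty_iff_ne_empty.2 fun h0 => hne (symmDiff_eq_bot.1 h0))
        (by rwa [flipOn_flipOn, symmDiff_symmDiff_cancel_right])
      exact symmDiff_le_sup.trans (union_subset (mem_powerset.1 hG) (mem_powerset.1 hF))
    · push Not at hex
      rw [sum_eq_zero fun F hF => ind_of_false (hex F hF)]
      exact zero_le_one
  have havg := expect_le_expect fun ξ (_ : ξ ∈ univ) => disjoint_translates ξ
  simp only [expect_sum_comm, Fintype.expect_const, expect_flipOn _ fun ξ => ind (bad ξ),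
    sum_const, card_powerset, nsmul_eq_mul] at havg
  rw [one_div, inv_pow, ← one_div, le_div_iff₀ (by positivity)]
  push_cast at havg
  linarith

lemma expect_ind_le_of_three_flips (F₁ F₂ F₃ : Finset ι) (bad : (ι → Bool) → Prop)
    (h : ∀ ξ, bad ξ → bad (flipOn F₁ ξ) → bad (flipOn F₂ ξ) → ¬bad (flipOn F₃ ξ)) :
    𝔼 ξ, ind (bad ξ) ≤ 3 / 4 := by
  have one_good : ∀ ξ, ind (bad ξ) + ind (bad (flipOn F₁ ξ)) + ind (bad (flipOn F₂ ξ)) +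
      ind (bad (flipOn F₃ ξ)) ≤ 3 := fun ξ => by
    have := h ξ
    unfold ind
    split_ifs <;> first | (exfalso; tauto) | norm_num
  have havg := expect_le_expect fun ξ (_ : ξ ∈ univ) => one_good ξ
  simp only [expect_add_distrib, expect_flipOn _ fun ξ => ind (bad ξ), Fintype.expect_const] at havg
  linarith

end signPatterns

/-! ### Small balls for Rademacher sums in a Hilbert space -/

section rsum
variable {ι H : Type*} [NormedAddCommGroup H] [InnerProductSpace ℝ H]

/-- The Rademacher sum of the vectors `v t` with `t ∈ J`. -/
noncomputable def rsum (v : ι → H) (J : Finset ι) (ξ : ι → Bool) : H := ∑ t ∈ J, rad (ξ t) • v t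

variable (v : ι → H) {J J₁ : Finset ι}

lemma rsum_congr {ξ ζ : ι → Bool} (h : ∀ t ∈ J, ξ t = ζ t) : rsum v J ξ = rsum v J ζ :=
  sum_congr rfl fun t ht => by rw [h t ht]

lemma norm_rad_smul (b : Bool) (u : H) : ‖rad b • u‖ = ‖u‖ := by
  rw [norm_smul, Real.norm_eq_abs, abs_rad, one_mul]

lemma norm_add_pow_four_add_le (a u : H) :
    ‖a + u‖ ^ 4 + ‖-a + u‖ ^ 4 ≤ 2 * ‖u‖ ^ 4 + (12 * ‖a‖ ^ 2 * ‖u‖ ^ 2 + 2 * ‖a‖ ^ 4) := by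
  have cauchy_schwarz : inner ℝ a u ^ 2 ≤ ‖a‖ ^ 2 * ‖u‖ ^ 2 := by
    rw [← mul_pow, sq_le_sq, abs_of_nonneg (mul_nonneg (norm_nonneg a) (norm_nonneg u))]
    exact abs_real_inner_le_norm a u
  have expand (b : H) : ‖b + u‖ ^ 4 = (‖b‖ ^ 2 + 2 * inner ℝ b u + ‖u‖ ^ 2) ^ 2 := by
    rw [← norm_add_sq_real, ← pow_mul]
  rw [expand, expand, norm_neg, inner_neg_left]
  nlinarith [cauchy_schwarz]

variable [DecidableEq ι]

lemma rsum_insert {t : ι} (ht : t ∉ J) (ξ : ι → Bool) :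
    rsum v (insert t J) ξ = rad (ξ t) • v t + rsum v J ξ := sum_insert ht

lemma rsum_insert_flipOn {t : ι} (ht : t ∉ J) (ξ : ι → Bool) :
    rsum v (insert t J) (flipOn {t} ξ) = -(rad (ξ t) • v t) + rsum v J ξ := by
  rw [rsum_insert v ht, rad_flipOn_of_mem (mem_singleton_self t), neg_smul,
    rsum_congr v fun s hs => flipOn_of_notMem (mt mem_singleton.1 (ne_of_mem_of_not_mem hs ht)) ξ]

lemma rsum_piecewise (h : J₁ ⊆ J) (ξ ζ : ι → Bool) :
    rsum v J (J₁.piecewise ξ ζ) = rsum v (J \ J₁) ζ + rsum v J₁ ξ := by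
  rw [← rsum_congr v fun t ht => J₁.piecewise_eq_of_mem ξ ζ ht,
    ← rsum_congr v fun t ht => J₁.piecewise_eq_of_notMem ξ ζ (mem_sdiff.1 ht).2]
  exact (sum_sdiff h).symm

variable [Fintype ι] (J)

lemma expect_rsum_split (h : J₁ ⊆ J) (g : H → ℝ) :
    𝔼 ξ, g (rsum v J ξ) = 𝔼 ζ, 𝔼 ξ, g (rsum v (J \ J₁) ζ + rsum v J₁ ξ) := by
  rw [← expect_piecewise J₁]
  simp only [rsum_piecewise v h]

lemma expect_norm_rsum_sq : 𝔼 ξ, ‖rsum v J ξ‖ ^ 2 = ∑ t ∈ J, ‖v t‖ ^ 2 := by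
  induction J using Finset.induction_on with
  | empty => simp [rsum]
  | insert t J ht ih =>
    have parallelogram (ξ : ι → Bool) :
        ‖rsum v (insert t J) ξ‖ ^ 2 + ‖rsum v (insert t J) (flipOn {t} ξ)‖ ^ 2 =
          2 * ‖rsum v J ξ‖ ^ 2 + 2 * ‖v t‖ ^ 2 := by
      rw [rsum_insert v ht, rsum_insert_flipOn v ht, norm_add_sq_real, norm_add_sq_real, norm_neg,
        inner_neg_left, norm_rad_smul]
      ring
    have havg := congrArg (fun f : (ι → Bool) → ℝ => 𝔼 ξ, f ξ) (funext parallelogram)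
    simp only [expect_add_distrib, expect_flipOn _ fun ξ => ‖rsum v (insert t J) ξ‖ ^ 2,
      ← mul_expect, Fintype.expect_const, ih] at havg
    rw [sum_insert ht]
    linarith

lemma expect_norm_rsum_pow_four_le :
    𝔼 ξ, ‖rsum v J ξ‖ ^ 4 ≤ 3 * (∑ t ∈ J, ‖v t‖ ^ 2) ^ 2 := by
  induction J using Finset.induction_on with
  | empty => simp [rsum]
  | insert t J ht ih =>
    have average_signs (ξ : ι → Bool) :
        ‖rsum v (insert t J) ξ‖ ^ 4 + ‖rsum v (insert t J) (flipOn {t} ξ)‖ ^ 4 ≤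
          2 * ‖rsum v J ξ‖ ^ 4 + (12 * ‖v t‖ ^ 2 * ‖rsum v J ξ‖ ^ 2 + 2 * ‖v t‖ ^ 4) := by
      rw [rsum_insert v ht, rsum_insert_flipOn v ht, ← norm_rad_smul (ξ t) (v t)]
      exact norm_add_pow_four_add_le _ _
    have havg := expect_le_expect fun ξ (_ : ξ ∈ univ) => average_signs ξ
    simp only [expect_add_distrib, expect_flipOn _ fun ξ => ‖rsum v (insert t J) ξ‖ ^ 4,
      ← mul_expect, Fintype.expect_const, expect_norm_rsum_sq] at havg
    rw [sum_insert ht]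
    nlinarith [sq_nonneg (‖v t‖ ^ 2)]

-- Paley–Zygmund: `(z - 1/2) (7 - z) / 11` is a polynomial minorant of the indicator of `z ≥ 1/2`.
lemma one_div_twelve_le_expect_norm_rsum (hpos : 0 < ∑ t ∈ J, ‖v t‖ ^ 2) :
    1 / 12 ≤ 𝔼 ξ, ind ((∑ t ∈ J, ‖v t‖ ^ 2) / 2 ≤ ‖rsum v J ξ‖ ^ 2) := by
  have second := expect_norm_rsum_sq v J
  have fourth := expect_norm_rsum_pow_four_le v J
  set σ := ∑ t ∈ J, ‖v t‖ ^ 2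
  have minorant (ξ : ι → Bool) : 15 / (22 * σ) * ‖rsum v J ξ‖ ^ 2 +
      (-(1 / (11 * σ ^ 2)) * ‖rsum v J ξ‖ ^ 4 + -(7 / 22)) ≤ ind (σ / 2 ≤ ‖rsum v J ξ‖ ^ 2) := by
    obtain ⟨z, hz⟩ : ∃ z, ‖rsum v J ξ‖ ^ 2 = σ * z := ⟨‖rsum v J ξ‖ ^ 2 / σ, by field_simp⟩
    have hfactor : 15 / (22 * σ) * ‖rsum v J ξ‖ ^ 2 +
        (-(1 / (11 * σ ^ 2)) * ‖rsum v J ξ‖ ^ 4 + -(7 / 22)) = (z - 1 / 2) * (7 - z) / 11 := by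
      rw [show ‖rsum v J ξ‖ ^ 4 = (σ * z) ^ 2 by rw [← hz, ← pow_mul], hz]
      field_simp
      ring
    rw [hfactor]
    by_cases hc : σ / 2 ≤ ‖rsum v J ξ‖ ^ 2
    · rw [ind_of_true hc]
      nlinarith [sq_nonneg (z - 15 / 4)]
    · rw [ind_of_false hc]
      have : z < 1 / 2 := by
        rw [hz] at hc
        nlinarith
      nlinarith
  have havg := expect_le_expect fun ξ (_ : ξ ∈ univ) => minorant ξ
  simp only [expect_add_distrib, ← mul_expect, Fintype.expect_const, second] at havg
  have hfourth : 1 / (11 * σ ^ 2) * 𝔼 ξ, ‖rsum v J ξ‖ ^ 4 ≤ 3 / 11 := by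
    calc _ ≤ 1 / (11 * σ ^ 2) * (3 * σ ^ 2) := by gcongr
      _ = 3 / 11 := by field_simp
  have hsecond : 15 / (22 * σ) * σ = 15 / 22 := by field_simp
  linarith

lemma expect_ind_lt_norm_rsum_le {m τ : ℝ} (hm : 0 < m) (h : ∑ t ∈ J, ‖v t‖ ^ 2 ≤ τ * m ^ 2) :
    𝔼 ξ, ind (m < ‖rsum v J ξ‖) ≤ τ := by
  have chebyshev (ξ : ι → Bool) : ind (m < ‖rsum v J ξ‖) ≤ 1 / m ^ 2 * ‖rsum v J ξ‖ ^ 2 :=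
    ind_le (by positivity) fun hlt => by
      rw [one_div, inv_mul_eq_div, one_le_div (by positivity)]
      gcongr
  calc _ ≤ 𝔼 ξ, 1 / m ^ 2 * ‖rsum v J ξ‖ ^ 2 := expect_le_expect fun ξ _ => chebyshev ξ
    _ = 1 / m ^ 2 * ∑ t ∈ J, ‖v t‖ ^ 2 := by rw [← mul_expect, expect_norm_rsum_sq]
    _ ≤ 1 / m ^ 2 * (τ * m ^ 2) := by gcongr
    _ = τ := by field_simp

lemma expect_ind_norm_add_rsum_lt_le {m r τ : ℝ} (hm : 0 < m)
    (hJ : ∑ t ∈ J, ‖v t‖ ^ 2 ≤ τ * m ^ 2) {h : H} (hh : m + r ≤ ‖h‖) :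
    𝔼 ξ, ind (‖h + rsum v J ξ‖ < r) ≤ τ := by
  refine (expect_le_expect fun ξ _ => ind_mono fun hlt => ?_).trans
    (expect_ind_lt_norm_rsum_le v J hm hJ)
  have : ‖h‖ ≤ ‖h + rsum v J ξ‖ + ‖rsum v J ξ‖ := by
    simpa using norm_sub_le (h + rsum v J ξ) (rsum v J ξ)
  linarith

lemma rsum_flipOn_univ (ξ : ι → Bool) : rsum v J (flipOn univ ξ) = -rsum v J ξ := by
  simp only [rsum, rad_flipOn_of_mem (mem_univ _), neg_smul, sum_neg_distrib]

lemma le_norm_add_or_le_norm_add_neg {h u : H} {c : ℝ} (hc : c ≤ ‖u‖) :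
    c ≤ ‖h + u‖ ∨ c ≤ ‖h + -u‖ := by
  have : 2 * ‖u‖ ≤ ‖h + u‖ + ‖h + -u‖ := by
    calc 2 * ‖u‖ = ‖(h + u) - (h + -u)‖ := by
          rw [show (h + u) - (h + -u) = (2 : ℝ) • u by rw [two_smul]; abel, norm_smul]
          simp
      _ ≤ _ := norm_sub_le _ _
  by_contra! hlt
  linarith [hlt.1, hlt.2]

/-- The sum over `J \ J₁` is symmetric and, with probability at least `1/12`, so large that one of
its two signs takes the whole sum out of reach of the summands in `J₁`. -/
lemma small_ball_step (hJ : J₁ ⊆ J) {m r τ Q : ℝ} (hm : 0 < m) (hr : r ≤ m) (hτ : τ ≤ Q)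
    (hrest : ∑ t ∈ J₁, ‖v t‖ ^ 2 ≤ τ * m ^ 2) (hlarge : 8 * m ^ 2 ≤ ∑ t ∈ J \ J₁, ‖v t‖ ^ 2)
    (hQ : ∀ h, 𝔼 ξ, ind (‖h + rsum v J₁ ξ‖ < r) ≤ Q) (h : H) :
    𝔼 ξ, ind (‖h + rsum v J ξ‖ < r) ≤ Q - (Q - τ) / 24 := by
  let p (u : H) : ℝ := 𝔼 ξ, ind (‖h + u + rsum v J₁ ξ‖ < r)
  have pair (ζ : ι → Bool) : p (rsum v (J \ J₁) ζ) + p (rsum v (J \ J₁) (flipOn univ ζ)) ≤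
      2 * Q + -(Q - τ) * ind ((∑ t ∈ J \ J₁, ‖v t‖ ^ 2) / 2 ≤ ‖rsum v (J \ J₁) ζ‖ ^ 2) := by
    rw [rsum_flipOn_univ]
    set u := rsum v (J \ J₁) ζ
    have hu : p u ≤ Q := hQ (h + u)
    have hnegu : p (-u) ≤ Q := hQ (h + -u)
    by_cases hc : (∑ t ∈ J \ J₁, ‖v t‖ ^ 2) / 2 ≤ ‖u‖ ^ 2
    · rw [ind_of_true hc]
      have hreach : m + r ≤ ‖u‖ := by
        have : 2 * m ≤ ‖u‖ := le_of_sq_le_sq (by linarith) (norm_nonneg u)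
        linarith
      rcases le_norm_add_or_le_norm_add_neg (h := h) hreach with hfar | hfar
      all_goals
        have := expect_ind_norm_add_rsum_lt_le v J₁ hm hrest hfar
        linarith
    · rw [ind_of_false hc]
      linarith
  have havg := expect_le_expect fun ζ (_ : ζ ∈ univ) => pair ζ
  simp only [expect_add_distrib, expect_flipOn _ fun ζ => p (rsum v (J \ J₁) ζ), ← mul_expect,
    Fintype.expect_const] at havg
  have hprob := one_div_twelve_le_expect_norm_rsum v (J \ J₁) (by nlinarith [sq_pos_of_pos hm])
  have hgain := mul_le_mul_of_nonneg_left hprob (sub_nonneg.2 hτ)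
  rw [expect_rsum_split v J hJ fun u => ind (‖h + u‖ < r)]
  simp only [← add_assoc]
  linarith

lemma exists_subset_small_ball_step {a b τ r : ℝ} {κ₀ N : ℕ} (ha : 0 < a) (hb : 0 < b)
    (hτ : 0 < τ) (hτ1 : τ ≤ 1) (hκ : 1 + 8 * b / (a * τ) ≤ κ₀) (hN : 1 ≤ N) (hr : r ^ 2 ≤ N * b)
    (hJ : ∀ t ∈ J, a ≤ ‖v t‖ ^ 2 ∧ ‖v t‖ ^ 2 ≤ b) (hcard : N * κ₀ ≤ J.card) :
    ∃ J₁ ⊆ J, J₁.card = N ∧ ∀ Q, τ ≤ Q → (∀ h, 𝔼 ξ, ind (‖h + rsum v J₁ ξ‖ < r) ≤ Q) →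
      ∀ h, 𝔼 ξ, ind (‖h + rsum v J ξ‖ < r) ≤ Q - (Q - τ) / 24 := by
  have hκ1 : 1 ≤ κ₀ := by
    have : (1 : ℝ) ≤ κ₀ := (le_add_of_nonneg_right (by positivity)).trans hκ
    exact_mod_cast this
  obtain ⟨J₁, hJ₁, hJ₁card⟩ := exists_subset_card_eq ((Nat.le_mul_of_pos_right N hκ1).trans hcard)
  have : (0 : ℝ) < N := by exact_mod_cast hN
  have hm2 : √(N * b / τ) ^ 2 = N * b / τ := Real.sq_sqrt (by positivity)
  have hrm : r ≤ √(N * b / τ) :=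
    Real.le_sqrt_of_sq_le (hr.trans (le_div_self (by positivity) hτ hτ1))
  have hmany : (N : ℝ) * (8 * b / (a * τ)) ≤ (J \ J₁).card := by
    have h1 : ((J \ J₁).card : ℝ) + N = J.card := by
      exact_mod_cast hJ₁card ▸ card_sdiff_add_card_eq_card hJ₁
    have h2 : (N : ℝ) * κ₀ ≤ J.card := by exact_mod_cast hcard
    nlinarith
  have hlarge : 8 * √(N * b / τ) ^ 2 ≤ ∑ t ∈ J \ J₁, ‖v t‖ ^ 2 := by
    calc 8 * √(N * b / τ) ^ 2 = (N : ℝ) * (8 * b / (a * τ)) * a := by rw [hm2]; field_simp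
      _ ≤ (J \ J₁).card * a := by gcongr
      _ ≤ _ := by
        rw [← nsmul_eq_mul]
        exact card_nsmul_le_sum _ _ _ fun t ht => (hJ t (mem_sdiff.1 ht).1).1
  have hrest : ∑ t ∈ J₁, ‖v t‖ ^ 2 ≤ τ * √(N * b / τ) ^ 2 := by
    calc _ ≤ J₁.card • b := sum_le_card_nsmul _ _ _ fun t ht => (hJ t (hJ₁ ht)).2
      _ = _ := by rw [hm2, nsmul_eq_mul, hJ₁card]; field_simp
  exact ⟨J₁, hJ₁, hJ₁card, fun Q hQ hball h =>
    small_ball_step v J hJ₁ (by positivity) hrm hQ hrest hlarge hball h⟩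

lemma small_ball {a b τ r : ℝ} {κ₀ N₀ : ℕ} (ha : 0 < a) (hb : 0 < b) (hτ : 0 < τ) (hτ1 : τ ≤ 1)
    (hκ : 1 + 8 * b / (a * τ) ≤ κ₀) (hN : 1 ≤ N₀) (hr : r ^ 2 ≤ N₀ * b) (s : ℕ) :
    ∀ J : Finset ι, (∀ t ∈ J, a ≤ ‖v t‖ ^ 2 ∧ ‖v t‖ ^ 2 ≤ b) → N₀ * κ₀ ^ s ≤ J.card →
      ∀ h : H, 𝔼 ξ, ind (‖h + rsum v J ξ‖ < r) ≤ (23 / 24) ^ s + 24 * τ := by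
  induction s with
  | zero =>
    intro J _ _ h
    calc _ ≤ 𝔼 _ξ : ι → Bool, (1 : ℝ) := expect_le_expect fun ξ _ => ind_le_one _
      _ = 1 := Fintype.expect_const 1
      _ ≤ _ := by norm_num [hτ.le]
  | succ s ih =>
    intro J hJ hcard h
    have hκ1 : 1 ≤ κ₀ := by
      have : (1 : ℝ) ≤ κ₀ := (le_add_of_nonneg_right (by positivity)).trans hκ
      exact_mod_cast this
    have hN₀ : N₀ ≤ N₀ * κ₀ ^ s := Nat.le_mul_of_pos_right N₀ (pow_pos hκ1 s)
    obtain ⟨J₁, hJ₁, hJ₁card, hstep⟩ := exists_subset_small_ball_step v J ha hb hτ hτ1 hκ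
      (hN.trans hN₀) (hr.trans (by gcongr)) hJ (by rwa [mul_assoc, ← pow_succ])
    have hpow : (0 : ℝ) < (23 / 24) ^ s := by positivity
    have := hstep _ (by linarith) (ih J₁ (fun t ht => hJ t (hJ₁ ht)) hJ₁card.ge) h
    rw [pow_succ]
    linarith

end rsum

/-! ### Growth of the sum of squared permanents -/

/-- The sum of the squares of all permanents with row set `A` and columns inside `P`: the potential
that the growth phase keeps large. -/
noncomputable def gam {m n : ℕ} (M : Matrix (Fin m) (Fin n) ℝ) (P : Finset (Fin n))
    (A : Finset (Fin m)) : ℝ := ∑ T ∈ P.powerset, permOn M A T ^ 2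

/-- The coefficient of the entry in column `t` of a new row, in the vector of all permanents with
row set `A` and that row, and with columns inside `P`: at the column set `T ∋ t` it is the cofactor
of that entry. -/
noncomputable def cofVec {m n : ℕ} (M : Matrix (Fin m) (Fin n) ℝ) (P : Finset (Fin n))
    (A : Finset (Fin m)) (t : Fin n) : EuclideanSpace ℝ (Finset (Fin n)) :=
  WithLp.toLp 2 fun T => if t ∈ T ∧ T ⊆ P then permOn M A (T.erase t) else 0

section gam
variable {m n : ℕ} (M : Matrix (Fin m) (Fin n) ℝ) {P : Finset (Fin n)} {A : Finset (Fin m)}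

lemma norm_cofVec_sq {t : Fin n} (ht : t ∈ P) :
    ‖cofVec M P A t‖ ^ 2 = ∑ S ∈ P.powerset with t ∉ S, permOn M A S ^ 2 := by
  have entry (T : Finset (Fin n)) : ‖(cofVec M P A t).ofLp T‖ ^ 2 =
      if t ∈ T ∧ T ⊆ P then permOn M A (T.erase t) ^ 2 else 0 := by
    rw [Real.norm_eq_abs, sq_abs]
    unfold cofVec
    split_ifs with h <;> simp [h]
  rw [EuclideanSpace.norm_sq_eq, sum_congr rfl fun T _ => entry T, ← sum_filter]
  refine sum_bij' (fun T _ => T.erase t) (fun S _ => insert t S) ?_ ?_ ?_ ?_ fun _ _ => rfl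
  all_goals simp only [mem_filter, mem_powerset, mem_univ, true_and, and_imp]
  · exact fun T _ hT => ⟨(erase_subset t T).trans hT, notMem_erase t T⟩
  · exact fun S hS _ => ⟨mem_insert_self t S, insert_subset ht hS⟩
  · exact fun T ht _ => insert_erase ht
  · exact fun S _ ht => erase_insert ht

lemma norm_cofVec_sq_le {t : Fin n} (ht : t ∈ P) : ‖cofVec M P A t‖ ^ 2 ≤ gam M P A := by
  rw [norm_cofVec_sq M ht]
  exact sum_le_sum_of_subset_of_nonneg (filter_subset _ _) fun _ _ _ => sq_nonneg _

variable (P A) in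
lemma sum_norm_cofVec_sq :
    ∑ t ∈ P, ‖cofVec M P A t‖ ^ 2 = ((P.card : ℝ) - A.card) * gam M P A := by
  simp only [sum_congr rfl fun _ ht => norm_cofVec_sq M ht, gam, sum_filter, mul_sum]
  rw [sum_comm]
  refine sum_congr rfl fun S hS => ?_
  rw [← sum_filter, sum_const, filter_notMem_eq_sdiff, nsmul_eq_mul]
  by_cases hc : A.card = S.card
  · rw [card_sdiff_of_subset (mem_powerset.1 hS), Nat.cast_sub (card_le_card (mem_powerset.1 hS)),
      hc]
  · rw [permOn_eq_zero M hc]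
    ring

lemma le_two_mul_card_filter_norm_cofVec {w : ℕ} (hw : A.card + w ≤ P.card)
    (hpos : 0 < gam M P A) :
    w ≤ 2 * (P.filter fun t => w / (2 * n) * gam M P A ≤ ‖cofVec M P A t‖ ^ 2).card := by
  rcases Nat.eq_zero_or_pos n with rfl | hn
  · have := card_le_univ P
    rw [Fintype.card_fin] at this
    omega
  have hPn : P.card ≤ n := (card_le_univ P).trans_eq (Fintype.card_fin n)
  set Γ := gam M P A
  set a : ℝ := w / (2 * n) * Γ
  set J := P.filter fun t => a ≤ ‖cofVec M P A t‖ ^ 2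
  have total : (w : ℝ) * Γ ≤ (J.card + w / 2) * Γ := by
    calc (w : ℝ) * Γ ≤ ((P.card : ℝ) - A.card) * Γ := by
          gcongr
          have : (A.card : ℝ) + w ≤ P.card := by exact_mod_cast hw
          linarith
      _ = ∑ t ∈ J, ‖cofVec M P A t‖ ^ 2 +
          ∑ t ∈ P with ¬a ≤ ‖cofVec M P A t‖ ^ 2, ‖cofVec M P A t‖ ^ 2 := by
          rw [← sum_norm_cofVec_sq]
          exact (sum_filter_add_sum_filter_not P _ _).symm
      _ ≤ J.card • Γ + (P.filter fun t => ¬a ≤ ‖cofVec M P A t‖ ^ 2).card • a :=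
          add_le_add
            (sum_le_card_nsmul _ _ _ fun t ht => norm_cofVec_sq_le M (mem_filter.1 ht).1)
            (sum_le_card_nsmul _ _ _ fun t ht => (not_le.1 (mem_filter.1 ht).2).le)
      _ ≤ J.card * Γ + n * a := by
          rw [nsmul_eq_mul, nsmul_eq_mul]
          gcongr
          exact (card_filter_le _ _).trans hPn
      _ = (J.card + w / 2) * Γ := by
          simp only [a]
          field_simp
  have : (w : ℝ) ≤ 2 * J.card := by linarith [le_of_mul_le_mul_right total hpos]
  exact_mod_cast this

lemma exists_le_abs_permOn {K : ℝ} (hK : 0 < K) (h : K ^ 2 * 2 ^ P.card ≤ gam M P A) :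
    ∃ T ⊆ P, A.card = T.card ∧ K ≤ |permOn M A T| := by
  obtain ⟨T, hT, hle⟩ := exists_le_of_sum_le (f := fun _ => K ^ 2)
    (g := fun T => permOn M A T ^ 2) (powerset_nonempty P)
    (by rw [sum_const, card_powerset, nsmul_eq_mul, mul_comm]; exact_mod_cast h)
  refine ⟨T, mem_powerset.1 hT, ?_, by rwa [sq_le_sq, abs_of_pos hK] at hle⟩
  by_contra hc
  rw [permOn_eq_zero M hc] at hle
  nlinarith

lemma one_le_gam_empty (P : Finset (Fin n)) : 1 ≤ gam M P ∅ := by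
  calc (1 : ℝ) = permOn M ∅ ∅ ^ 2 := by rw [permOn_empty, one_pow]
    _ ≤ _ := single_le_sum (f := fun T => permOn M ∅ T ^ 2) (fun _ _ => sq_nonneg _)
      (empty_mem_powerset P)

variable (A) in
lemma gam_mono {Q : Finset (Fin n)} (h : P ⊆ Q) : gam M P A ≤ gam M Q A :=
  sum_le_sum_of_subset_of_nonneg (powerset_mono.2 h) fun _ _ _ => sq_nonneg _

end gam

section gamStep
variable {n : ℕ} (M : Matrix (Fin n) (Fin n) ℝ) {P A : Finset (Fin n)} {x : Fin n}

lemma gam_setRowCol (hP : x ∉ P) (hA : x ∉ A) (v : Fin n → ℝ) :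
    gam (setRowCol M x v) P A = gam M P A :=
  sum_congr rfl fun _ hT => by
    rw [permOn_setRowCol M v hA (notMem_mono (mem_powerset.1 hT) hP)]

lemma norm_rsum_cofVec_sq (hP : x ∉ P) (hA : x ∉ A) (ξ : Fin n → Bool) :
    ‖rsum (cofVec M P A) P ξ‖ ^ 2 = gam (setRowCol M x (rad ∘ ξ)) P (insert x A) := by
  rw [EuclideanSpace.norm_sq_eq, gam, ← sum_subset (subset_univ P.powerset)]
  · refine sum_congr rfl fun T hT => ?_
    rw [mem_powerset] at hT
    rw [permOn_setRowCol_insert_row _ _ hA (notMem_mono hT hP), Real.norm_eq_abs, sq_abs]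
    congr 1
    simp only [rsum, cofVec, WithLp.ofLp_sum, WithLp.ofLp_smul, Finset.sum_apply, Pi.smul_apply,
      smul_eq_mul, hT, and_true, mul_ite, mul_zero, Function.comp_apply]
    rw [sum_ite_mem, inter_eq_right.2 hT]
  · intro T _ hT
    rw [mem_powerset] at hT
    simp [rsum, cofVec, hT]

lemma gam_step (hP : x ∉ P) (hA : x ∉ A) {w s κ₀ N₀ : ℕ} {τ : ℝ} (hw : 0 < w)
    (hwP : A.card + w ≤ P.card) (hτ : 0 < τ) (hτ1 : τ ≤ 1) (hκ : 1 + 16 * n / (w * τ) ≤ κ₀)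
    (hN : 1 ≤ N₀) (hNw : 2 * (N₀ * κ₀ ^ s) ≤ w) (hpos : 0 < gam M P A) :
    𝔼 ξ : Fin n → Bool, ind (gam (setRowCol M x (rad ∘ ξ)) P (insert x A) < N₀ * gam M P A) ≤
      (23 / 24) ^ s + 24 * τ := by
  have hn : 0 < n := by
    have := (card_le_univ P).trans_eq (Fintype.card_fin n)
    omega
  set Γ := gam M P A
  set J := P.filter fun t => w / (2 * n) * Γ ≤ ‖cofVec M P A t‖ ^ 2
  have hJ : J ⊆ P := filter_subset _ _
  have hJcard : w ≤ 2 * J.card := le_two_mul_card_filter_norm_cofVec M hwP hpos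
  have hball := small_ball (cofVec M P A) (a := w / (2 * n) * Γ) (r := √(N₀ * Γ)) (by positivity)
    hpos hτ hτ1 (hκ.trans_eq' (by field_simp; ring)) hN (Real.sq_sqrt (by positivity)).le s J
    (fun t ht => ⟨(mem_filter.1 ht).2, norm_cofVec_sq_le M (hJ ht)⟩) (by omega)
  simp only [← norm_rsum_cofVec_sq M hP hA, ← Real.lt_sqrt (norm_nonneg _)]
  rw [expect_rsum_split (cofVec M P A) P hJ fun u => ind (‖u‖ < √(N₀ * Γ))]
  calc _ ≤ 𝔼 _ζ : Fin n → Bool, ((23 / 24) ^ s + 24 * τ : ℝ) :=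
        expect_le_expect fun ζ _ => hball _
    _ = _ := Fintype.expect_const _

end gamStep

/-! ### Revealing one index of the random matrix at a time -/

section resampling
variable {n : ℕ}

lemma prob_eq_expect (P : Matrix (Fin n) (Fin n) ℝ → Prop) :
    prob n P = 𝔼 ω, ind (P (symMat n ω)) := by
  rw [Fintype.expect_eq_sum_div_card, prob]
  simp [ind, pow_mul]

lemma one_sub_prob (P : Matrix (Fin n) (Fin n) ℝ → Prop) :
    1 - prob n P = 𝔼 ω, ind (¬P (symMat n ω)) := by
  simp only [ind_not, expect_sub_distrib, Fintype.expect_const, prob_eq_expect]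

/-- The data `ω` with the entries that determine row and column `x` of `symMat n ω` replaced by
`ξ`. The entries below the diagonal, on which `symMat n ω` does not depend, are kept. -/
def overwrite (x : Fin n) (ξ : Fin n → Bool) (ω : Fin n → Fin n → Bool) : Fin n → Fin n → Bool :=
  fun i j => if i ≤ j then if i = x then ξ j else if j = x then ξ i else ω i j else ω i j

/-- The signs in row `x` of `symMat n ω`. -/
def rowData (x : Fin n) (ω : Fin n → Fin n → Bool) : Fin n → Bool :=
  fun j => ω (min x j) (max x j)

lemma symMat_overwrite (x : Fin n) (ξ : Fin n → Bool) (ω : Fin n → Fin n → Bool) :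
    symMat n (overwrite x ξ ω) = setRowCol (symMat n ω) x (rad ∘ ξ) := by
  ext i j
  simp only [symMat, overwrite, setRowCol, Function.comp_apply]
  split_ifs <;> first | rfl | (exfalso; omega)

lemma overwrite_rowData (x : Fin n) (ξ : Fin n → Bool) (ω : Fin n → Fin n → Bool) :
    overwrite x (rowData x ω) (overwrite x ξ ω) = ω := by
  ext i j
  simp only [overwrite, rowData]
  split_ifs with hij hi hj
  · rw [← hi, min_eq_left hij, max_eq_right hij]
  · rw [← hj, min_eq_right hij, max_eq_left hij]
  · rfl
  · rfl

lemma rowData_overwrite (x : Fin n) (ξ : Fin n → Bool) (ω : Fin n → Fin n → Bool) :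
    rowData x (overwrite x ξ ω) = ξ := by
  ext j
  rcases le_total x j with h | h
  · simp [rowData, overwrite, h]
  · simp +contextual [rowData, overwrite, h]

lemma expect_setRowCol (x : Fin n) (f : Matrix (Fin n) (Fin n) ℝ → ℝ) :
    𝔼 ω, 𝔼 ξ : Fin n → Bool, f (setRowCol (symMat n ω) x (rad ∘ ξ)) = 𝔼 ω, f (symMat n ω) := by
  let swap (p : (Fin n → Fin n → Bool) × (Fin n → Bool)) := (overwrite x p.2 p.1, rowData x p.1)
  have swap_involutive : Function.Involutive swap := fun p =>
    Prod.ext (overwrite_rowData x p.2 p.1) (rowData_overwrite x p.2 p.1)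
  have h : 𝔼 p, f (symMat n (swap p).1) =
      𝔼 p : (Fin n → Fin n → Bool) × (Fin n → Bool), f (symMat n p.1) :=
    Fintype.expect_equiv swap_involutive.toPerm _ _ fun _ => rfl
  rw [← univ_product_univ, expect_product, expect_product] at h
  simpa only [Fintype.expect_const, swap, symMat_overwrite] using h

end resampling

/-- The least value of the potential `V` at a valid state, and the junk value `0` if no state is
valid. -/
noncomputable def best {α : Type*} (valid : α → Prop) (V : α → ℝ) : ℝ :=
  ⨅ s : {s // valid s}, V s

section best
variable {α : Type*} {valid : α → Prop} {V : α → ℝ}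

lemma best_le (hV : ∀ s, 0 ≤ V s) {s : α} (h : valid s) : best valid V ≤ V s :=
  ciInf_le (f := fun s : {s // valid s} => V s) ⟨0, by rintro _ ⟨t, rfl⟩; exact hV t⟩ ⟨s, h⟩

lemma best_nonneg (hV : ∀ s, 0 ≤ V s) : 0 ≤ best valid V := Real.iInf_nonneg fun s => hV s

lemma le_best (hex : ∃ s, valid s) {c : ℝ} (hc : ∀ s, valid s → c ≤ V s) : c ≤ best valid V :=
  have : Nonempty {s // valid s} := nonempty_subtype.2 hex
  le_ciInf fun s => hc s s.2

lemma exists_eq_best [Finite α] (hex : ∃ s, valid s) : ∃ s, valid s ∧ V s = best valid V := by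
  have : Nonempty {s // valid s} := nonempty_subtype.2 hex
  obtain ⟨s, hs⟩ := exists_eq_ciInf_of_finite (f := fun s : {s // valid s} => V s)
  exact ⟨s, s.2, hs⟩

end best

/-- The condition on the state `s`, where `valid P M s` says that `s` is valid for `M` once the
indices in `P` have been revealed: validity depends only on the entries of `M` indexed by `P`, and
is never lost. -/
structure Adapted {n : ℕ} {α : Type*}
    (valid : Finset (Fin n) → Matrix (Fin n) (Fin n) ℝ → α → Prop) : Prop where
  setRowCol_iff : ∀ {P M x} (v : Fin n → ℝ) {s}, x ∉ P →
    (valid P (setRowCol M x v) s ↔ valid P M s)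
  insert : ∀ {P M x s}, x ∉ P → valid P M s → valid (insert x P) M s

section reveal
variable {n : ℕ} {α : Type*} {valid : Finset (Fin n) → Matrix (Fin n) (Fin n) ℝ → α → Prop}
  {V : Finset (Fin n) → α → ℝ} {P₀ F : Finset (Fin n)}

lemma Adapted.insert_setRowCol (hvalid : Adapted valid) {P : Finset (Fin n)}
    {M : Matrix (Fin n) (Fin n) ℝ} {x : Fin n} {s : α} (hx : x ∉ P) (h : valid P M s)
    (v : Fin n → ℝ) : valid (Insert.insert x P) (setRowCol M x v) s :=
  hvalid.insert hx ((hvalid.setRowCol_iff v hx).2 h)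

lemma Adapted.union (hvalid : Adapted valid) (hdisj : Disjoint P₀ F)
    {M : Matrix (Fin n) (Fin n) ℝ} {s : α} (h : valid P₀ M s) : valid (P₀ ∪ F) M s := by
  induction F using Finset.induction_on with
  | empty => simpa using h
  | insert x F hx ih =>
    rw [disjoint_insert_right] at hdisj
    rw [union_insert]
    exact hvalid.insert (by simp [hdisj.1, hx]) (ih hdisj.2)

/-- The least potential of a valid state is a supermartingale, up to the factor `κ` and the additive
error `b` in each step. -/
lemma expect_best_union_le [Finite α] (hvalid : Adapted valid) (hdisj : Disjoint P₀ F) {κ b : ℝ}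
    (hκ : 0 ≤ κ) (hb : 0 ≤ b)
    (hstep : ∀ P M x s, P₀ ⊆ P → x ∈ F → x ∉ P → valid P M s →
      𝔼 ξ : Fin n → Bool, best (valid (insert x P) (setRowCol M x (rad ∘ ξ))) (V (insert x P)) ≤
        κ * V P s + b) :
    𝔼 ω, ind (∃ s, valid P₀ (symMat n ω) s) * best (valid (P₀ ∪ F) (symMat n ω)) (V (P₀ ∪ F)) ≤
      κ ^ F.card * 𝔼 ω, ind (∃ s, valid P₀ (symMat n ω) s) * best (valid P₀ (symMat n ω)) (V P₀) +
        b * ∑ i ∈ range F.card, κ ^ i := by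
  induction F using Finset.induction_on with
  | empty => simp
  | insert x F hx ih =>
    rw [disjoint_insert_right] at hdisj
    have hxP : x ∉ P₀ ∪ F := by simp [hdisj.1, hx]
    have step (M : Matrix (Fin n) (Fin n) ℝ) :
        𝔼 ξ : Fin n → Bool, ind (∃ s, valid P₀ (setRowCol M x (rad ∘ ξ)) s) *
          best (valid (insert x (P₀ ∪ F)) (setRowCol M x (rad ∘ ξ))) (V (insert x (P₀ ∪ F))) ≤
        κ * (ind (∃ s, valid P₀ M s) * best (valid (P₀ ∪ F) M) (V (P₀ ∪ F))) + b := by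
      simp only [hvalid.setRowCol_iff _ hdisj.1, ← mul_expect]
      by_cases hex : ∃ s, valid P₀ M s
      · obtain ⟨t, ht, hbest⟩ :=
          exists_eq_best (V := V (P₀ ∪ F)) (hex.imp fun s => hvalid.union hdisj.2)
        rw [ind_of_true hex, one_mul, one_mul, ← hbest]
        exact hstep _ M x t subset_union_left (mem_insert_self x F) hxP ht
      · rw [ind_of_false hex]
        simpa using hb
    have ih := ih hdisj.2 fun P M y s hP hy => hstep P M y s hP (mem_insert_of_mem hy)
    rw [union_insert, card_insert_of_notMem hx, geom_sum_succ,
      ← expect_setRowCol x fun M => ind (∃ s, valid P₀ M s) *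
        best (valid (insert x (P₀ ∪ F)) M) (V (insert x (P₀ ∪ F)))]
    refine (expect_le_expect fun ω _ => step (symMat n ω)).trans ?_
    rw [expect_add_distrib, ← mul_expect, Fintype.expect_const]
    exact (add_le_add_left (mul_le_mul_of_nonneg_left ih hκ) b).trans_eq (by ring)

lemma expect_best_le (hV : ∀ s, 0 ≤ V P₀ s) {V₀ : ℝ} (hV₀ : 0 ≤ V₀)
    (hstart : ∀ M s, valid P₀ M s → V P₀ s ≤ V₀) :
    𝔼 ω, ind (∃ s, valid P₀ (symMat n ω) s) * best (valid P₀ (symMat n ω)) (V P₀) ≤ V₀ := by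
  calc _ ≤ 𝔼 _ω : Fin n → Fin n → Bool, V₀ := expect_le_expect fun ω _ => ?_
    _ = V₀ := Fintype.expect_const V₀
  by_cases hex : ∃ s, valid P₀ (symMat n ω) s
  · rw [ind_of_true hex, one_mul]
    obtain ⟨s, hs⟩ := hex
    exact (best_le hV hs).trans (hstart _ s hs)
  · rwa [ind_of_false hex, zero_mul]

lemma mul_expect_ind_le_expect_best (hvalid : Adapted valid) (hdisj : Disjoint P₀ F)
    (hV : ∀ s, 0 ≤ V (P₀ ∪ F) s) {good : Matrix (Fin n) (Fin n) ℝ → Prop} {K : ℝ}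
    (hgood : ∀ M s, valid (P₀ ∪ F) M s → ¬good M → K ≤ V (P₀ ∪ F) s) :
    K * 𝔼 ω, ind ((∃ s, valid P₀ (symMat n ω) s) ∧ ¬good (symMat n ω)) ≤
      𝔼 ω, ind (∃ s, valid P₀ (symMat n ω) s) *
        best (valid (P₀ ∪ F) (symMat n ω)) (V (P₀ ∪ F)) := by
  rw [mul_expect]
  refine expect_le_expect fun ω _ => ?_
  by_cases h : (∃ s, valid P₀ (symMat n ω) s) ∧ ¬good (symMat n ω)
  · rw [ind_of_true h, ind_of_true h.1, mul_one, one_mul]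
    exact le_best (h.1.imp fun s => hvalid.union hdisj) fun s hs => hgood _ s hs h.2
  · rw [ind_of_false h, mul_zero]
    exact mul_nonneg (ind_nonneg _) (best_nonneg hV)

end reveal

/-! ### The growth phase -/

/-- The state `A` of the growth phase: a set of rows outside `P₀`, each of which has contributed a
factor `N₀` to the sum of squared permanents. -/
def IsGrown {n : ℕ} (P₀ : Finset (Fin n)) (N₀ : ℕ) (P : Finset (Fin n))
    (M : Matrix (Fin n) (Fin n) ℝ) (A : Finset (Fin n)) : Prop :=
  A ⊆ P \ P₀ ∧ (N₀ : ℝ) ^ A.card ≤ gam M P A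

section growth
variable {n : ℕ} {M : Matrix (Fin n) (Fin n) ℝ} {P P₀ A : Finset (Fin n)} {x : Fin n} {N₀ : ℕ}

lemma isGrown_adapted : Adapted (IsGrown P₀ N₀) where
  setRowCol_iff {P M x} v {A} hx := and_congr_right fun hA => by
    rw [gam_setRowCol M hx (notMem_mono (hA.trans sdiff_subset) hx)]
  insert {P M x A} _ h := ⟨h.1.trans (sdiff_subset_sdiff (subset_insert x P) subset_rfl),
    h.2.trans (gam_mono M A (subset_insert x P))⟩

lemma isGrown_empty : IsGrown P₀ N₀ P M ∅ :=
  ⟨empty_subset _, by simpa using one_le_gam_empty M P⟩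

lemma IsGrown.insert_row (h : IsGrown P₀ N₀ P M A) (hx : x ∉ P) (hxP₀ : x ∉ P₀) {v : Fin n → ℝ}
    (hv : N₀ * gam M P A ≤ gam (setRowCol M x v) P (insert x A)) :
    IsGrown P₀ N₀ (insert x P) (setRowCol M x v) (insert x A) := by
  refine ⟨(insert_sdiff_of_notMem P hxP₀).symm ▸ insert_subset_insert x h.1, ?_⟩
  rw [card_insert_of_notMem (notMem_mono (h.1.trans sdiff_subset) hx), pow_succ']
  calc (N₀ : ℝ) * N₀ ^ A.card ≤ N₀ * gam M P A := by gcongr; exact h.2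
    _ ≤ _ := hv.trans (gam_mono _ _ (subset_insert x P))

lemma growth_step {w s κ₀ : ℕ} {τ β : ℝ} (hw : 0 < w) (hwP : w ≤ P₀.card) (hτ : 0 < τ)
    (hτ1 : τ ≤ 1) (hκ : 1 + 16 * n / (w * τ) ≤ κ₀) (hN : 1 ≤ N₀) (hNw : 2 * (N₀ * κ₀ ^ s) ≤ w)
    (hβ : 0 ≤ β) (hβ1 : β * ((23 / 24) ^ s + 24 * τ) ≤ 1) (hP : P₀ ⊆ P) (hx : x ∉ P)
    (h : IsGrown P₀ N₀ P M A) :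
    𝔼 ξ : Fin n → Bool, best (IsGrown P₀ N₀ (insert x P) (setRowCol M x (rad ∘ ξ)))
      (fun A => β ^ ((insert x P \ P₀) \ A).card) ≤ 2 * β ^ ((P \ P₀) \ A).card := by
  have hxA : x ∉ A := notMem_mono (h.1.trans sdiff_subset) hx
  have hxP₀ : x ∉ P \ P₀ := notMem_mono sdiff_subset hx
  have hpos : 0 < gam M P A := (by positivity : (0 : ℝ) < N₀ ^ A.card).trans_le h.2
  have hcard : A.card + w ≤ P.card := by
    have := card_le_card h.1
    rw [card_sdiff_of_subset hP] at this
    have := card_le_card hP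
    omega
  have pointwise (ξ : Fin n → Bool) :
      best (IsGrown P₀ N₀ (insert x P) (setRowCol M x (rad ∘ ξ)))
        (fun A => β ^ ((insert x P \ P₀) \ A).card) ≤ β ^ ((P \ P₀) \ A).card +
          β * β ^ ((P \ P₀) \ A).card *
            ind (gam (setRowCol M x (rad ∘ ξ)) P (insert x A) < N₀ * gam M P A) := by
    have hnew : insert x P \ P₀ = insert x (P \ P₀) :=
      insert_sdiff_of_notMem P (notMem_mono hP hx)
    by_cases hc : gam (setRowCol M x (rad ∘ ξ)) P (insert x A) < N₀ * gam M P A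
    · refine (best_le (fun _ => by positivity) (isGrown_adapted.insert_setRowCol hx h _)).trans ?_
      rw [hnew, insert_sdiff_of_notMem _ hxA, card_insert_of_notMem (by simp [hx]), pow_succ',
        ind_of_true hc, mul_one]
      exact le_add_of_nonneg_left (by positivity)
    · refine (best_le (fun _ => by positivity)
        (h.insert_row hx (notMem_mono hP hx) (not_lt.1 hc))).trans ?_
      rw [hnew, insert_sdiff_insert, sdiff_insert_of_notMem hxP₀, ind_of_false hc, mul_zero,
        add_zero]
  refine (expect_le_expect fun ξ _ => pointwise ξ).trans ?_
  have hball := gam_step M hx hxA hw hcard hτ hτ1 hκ hN hNw hpos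
  rw [expect_add_distrib, ← mul_expect, Fintype.expect_const, two_mul]
  gcongr
  calc _ ≤ β * β ^ ((P \ P₀) \ A).card * ((23 / 24) ^ s + 24 * τ) := by gcongr
    _ = β * ((23 / 24) ^ s + 24 * τ) * β ^ ((P \ P₀) \ A).card := by ring
    _ ≤ _ := mul_le_of_le_one_left (by positivity) hβ1

lemma growth_phase {F : Finset (Fin n)} (hdisj : Disjoint P₀ F) {w s κ₀ : ℕ} {τ β : ℝ} (j : ℕ)
    (hw : 0 < w) (hwP : w ≤ P₀.card) (hτ : 0 < τ) (hτ1 : τ ≤ 1) (hκ : 1 + 16 * n / (w * τ) ≤ κ₀)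
    (hN : 1 ≤ N₀) (hNw : 2 * (N₀ * κ₀ ^ s) ≤ w) (hβ : 1 ≤ β)
    (hβ1 : β * ((23 / 24) ^ s + 24 * τ) ≤ 1) :
    𝔼 ω, ind (¬∃ A ⊆ F, F.card ≤ A.card + j ∧ (N₀ : ℝ) ^ A.card ≤ gam (symMat n ω) (P₀ ∪ F) A) ≤
      2 ^ F.card / β ^ (j + 1) := by
  have hβ0 : 0 ≤ β := zero_le_one.trans hβ
  have hrun := expect_best_union_le (V := fun P A => β ^ ((P \ P₀) \ A).card) isGrown_adapted hdisj
    zero_le_two le_rfl fun P M x A hP _ hx h =>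
      (growth_step hw hwP hτ hτ1 hκ hN hNw hβ0 hβ1 hP hx h).trans_eq (add_zero _).symm
  have hstart := expect_best_le (valid := IsGrown P₀ N₀) (V := fun P A => β ^ ((P \ P₀) \ A).card)
    (P₀ := P₀) (fun _ => by positivity) zero_le_one fun M A _ => by simp
  have hmarkov := mul_expect_ind_le_expect_best (valid := IsGrown P₀ N₀)
    (V := fun P A => β ^ ((P \ P₀) \ A).card) isGrown_adapted hdisj (fun _ => by positivity)
    (good := fun M => ∃ A ⊆ F, F.card ≤ A.card + j ∧ (N₀ : ℝ) ^ A.card ≤ gam M (P₀ ∪ F) A)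
    (K := β ^ (j + 1)) fun M A hA hc => by
      have hF : (P₀ ∪ F) \ P₀ = F := by
        rw [union_sdiff_left, sdiff_eq_self_of_disjoint hdisj.symm]
      rw [IsGrown, hF] at hA
      rw [hF, card_sdiff_of_subset hA.1]
      refine pow_le_pow_right₀ hβ ?_
      by_contra hcard
      exact hc ⟨A, hA.1, by omega, hA.2⟩
  have hex (M : Matrix (Fin n) (Fin n) ℝ) : ∃ A, IsGrown P₀ N₀ P₀ M A := ⟨∅, isGrown_empty⟩
  simp only [hex, true_and] at hmarkov hrun hstart
  rw [le_div_iff₀' (by positivity)]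
  have : (2 : ℝ) ^ F.card * _ ≤ 2 ^ F.card * 1 := mul_le_mul_of_nonneg_left hstart (by positivity)
  linarith

end growth

/-! ### Extending a single minor by a random row, or by a random row and column -/

lemma permOn_neg_entry {m n : ℕ} {M N : Matrix (Fin m) (Fin n) ℝ} {A : Finset (Fin m)}
    {B : Finset (Fin n)} {r : Fin m} {c : Fin n} (hr : r ∉ A) (hc : c ∉ B) (hneg : N r c = -M r c)
    (hrow : ∀ j ∈ B, N r j = M r j) (hrest : ∀ i ∈ A, ∀ j ∈ insert c B, N i j = M i j) :
    permOn N (insert r A) (insert c B) =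
      permOn M (insert r A) (insert c B) - 2 * (M r c * permOn M A B) := by
  have hminor {T : Finset (Fin n)} (hT : T ⊆ insert c B) : permOn N A T = permOn M A T :=
    permOn_congr fun i hi j hj => hrest i hi j (hT hj)
  rw [permOn_insert_row _ _ hr, permOn_insert_row _ _ hr, sum_insert hc, sum_insert hc,
    erase_insert hc, hneg, hminor (subset_insert c B),
    sum_congr rfl fun j hj => by rw [hrow j hj, hminor (erase_subset j _)]]
  ring

lemma abs_lt_of_abs_sub_two_mul_lt {a b l : ℝ} (h₁ : |a| < l) (h₂ : |a - 2 * b| < l) : |b| < l := by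
  rw [abs_lt] at *
  constructor <;> linarith

lemma expect_le_of_two_stages {Ω : Type*} [Fintype Ω] [Nonempty Ω] {p q : Ω → Prop} {g : Ω → ℝ}
    {α₀ α₁ α₂ δ η : ℝ} (hp : 𝔼 ξ, ind (¬p ξ) ≤ δ) (hq : 𝔼 ξ, ind (p ξ ∧ ¬q ξ) ≤ η) (h0 : 0 ≤ α₀)
    (h2 : 0 ≤ α₂) (h21 : α₂ ≤ α₁) (hg0 : ∀ ξ, g ξ ≤ α₀) (hg1 : ∀ ξ, p ξ → g ξ ≤ α₁)
    (hg2 : ∀ ξ, q ξ → g ξ ≤ α₂) :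
    𝔼 ξ, g ξ ≤ α₀ * δ + ((α₁ - α₂) * η + α₂) := by
  have pointwise (ξ : Ω) :
      g ξ ≤ α₀ * ind (¬p ξ) + ((α₁ - α₂) * ind (p ξ ∧ ¬q ξ) + α₂) := by
    have := hg0 ξ
    by_cases hpξ : p ξ <;> by_cases hqξ : q ξ <;> simp [ind, hpξ, hqξ, hg1, hg2] <;> linarith
  refine (expect_le_expect fun ξ _ => pointwise ξ).trans ?_
  rw [expect_add_distrib, expect_add_distrib, ← mul_expect, ← mul_expect, Fintype.expect_const]
  gcongr

section extend
variable {n : ℕ} (M : Matrix (Fin n) (Fin n) ℝ) {x c : Fin n} {A B D : Finset (Fin n)} {l : ℝ}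

lemma expect_ind_insert_row_lt_le (hxA : x ∉ A) (hxB : x ∉ B) (hxD : x ∉ D) (hD : Disjoint D B)
    (hl : l ≤ |permOn M A B|) :
    𝔼 ξ : Fin n → Bool,
        ind (¬∃ d ∈ D, l ≤ |permOn (setRowCol M x (rad ∘ ξ)) (insert x A) (insert d B)|) ≤
      (1 / 2) ^ D.card := by
  refine expect_ind_le_of_flipOn D _ fun ξ hbad F hFD ⟨d, hd⟩ hflip => ?_
  push Not at hbad hflip
  have hdB : d ∉ B := disjoint_left.1 hD (hFD hd)
  have hxd : d ≠ x := ne_of_mem_of_not_mem (hFD hd) hxD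
  have hflip := hflip d (hFD hd)
  rw [permOn_neg_entry (M := setRowCol M x (rad ∘ ξ)) hxA hdB] at hflip
  · have := abs_lt_of_abs_sub_two_mul_lt (hbad d (hFD hd)) hflip
    rw [permOn_setRowCol M _ hxA hxB, setRowCol, if_pos rfl, Function.comp_apply, abs_mul, abs_rad,
      one_mul] at this
    exact this.not_ge hl
  · simp [setRowCol, rad_flipOn_of_mem hd]
  · intro j hj
    simp [setRowCol, flipOn_of_notMem fun h => disjoint_left.1 hD (hFD h) hj]
  · intro i hi j hj
    have hjx : j ≠ x := ne_of_mem_of_not_mem hj (by simp [hxB, hxd.symm])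
    simp [setRowCol, ne_of_mem_of_not_mem hi hxA, hjx]

/-- The sign at `c` does not affect the permanents with the row `x` added, and it multiplies these
permanents in those with the row `c` and the column `x` added on top. -/
lemma expect_ind_insert_both_lt_le (hxB : x ∉ B) (hxD : x ∉ D) (hcx : c ≠ x)
    (hcA : c ∉ A) (hcB : c ∉ B) (hcD : c ∉ D) :
    𝔼 ξ : Fin n → Bool,
        ind ((∃ d ∈ D, l ≤ |permOn (setRowCol M x (rad ∘ ξ)) (insert x A) (insert d B)|) ∧
          ¬∃ d ∈ D, l ≤ |permOn (setRowCol M x (rad ∘ ξ)) (insert x A) (insert d B)| ∧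
            l ≤ |permOn (setRowCol M x (rad ∘ ξ)) (insert c (insert x A))
              (insert x (insert d B))|) ≤
      1 / 2 := by
  refine (expect_ind_le_of_flipOn {c} _ ?_).trans_eq (by simp)
  rintro ξ ⟨⟨d, hd, hl⟩, hbad⟩ F hF hne ⟨-, hflip⟩
  obtain rfl : F = {c} := (subset_singleton_iff.1 hF).resolve_left hne.ne_empty
  have hxd : x ∉ insert d B := by simp [hxB, (ne_of_mem_of_not_mem hd hxD).symm]
  have hcd : c ∉ insert d B := by simp [hcB, (ne_of_mem_of_not_mem hd hcD).symm]
  have hcxA : c ∉ insert x A := by simp [hcx, hcA]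
  have hsame (j : Fin n) (hj : j ≠ c) : flipOn {c} ξ j = ξ j := flipOn_of_notMem (by simpa) ξ
  have hentry : ∀ i ∈ insert x A, ∀ j ∈ insert x (insert d B),
      setRowCol M x (rad ∘ flipOn {c} ξ) i j = setRowCol M x (rad ∘ ξ) i j := fun i hi j hj => by
    have hj : j ≠ c := ne_of_mem_of_not_mem hj (by simp only [mem_insert, hcx, false_or, hcd,
      not_false_eq_true])
    simp only [setRowCol, Function.comp_apply, hsame j hj,
      hsame i (ne_of_mem_of_not_mem hi hcxA)]
  push Not at hbad hflip
  have hflip := hflip d hd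
  rw [permOn_congr fun i hi j hj => hentry i hi j (mem_insert_of_mem hj),
    permOn_neg_entry (M := setRowCol M x (rad ∘ ξ)) hcxA hxd _ _ hentry] at hflip
  · have := abs_lt_of_abs_sub_two_mul_lt (hbad d hd hl) (hflip hl)
    rw [setRowCol, if_neg hcx, if_pos rfl, Function.comp_apply, abs_mul, abs_rad, one_mul] at this
    exact this.not_ge hl
  · simp [setRowCol, hcx, rad_flipOn_of_mem]
  · intro j hj
    simp [setRowCol, hcx, ne_of_mem_of_not_mem hj hxd]

lemma expect_le_of_insert_row_or_both (hxA : x ∉ A) (hxB : x ∉ B) (hxD : x ∉ D)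
    (hD : Disjoint D B) (hl : l ≤ |permOn M A B|) (hcx : c ≠ x) (hcA : c ∉ A) (hcB : c ∉ B)
    (hcD : c ∉ D) {g : (Fin n → Bool) → ℝ} {α₀ α₁ α₂ : ℝ} (h0 : 0 ≤ α₀) (h2 : 0 ≤ α₂)
    (h21 : α₂ ≤ α₁) (hg0 : ∀ ξ, g ξ ≤ α₀)
    (hg1 : ∀ ξ, ∀ d ∈ D,
      l ≤ |permOn (setRowCol M x (rad ∘ ξ)) (insert x A) (insert d B)| → g ξ ≤ α₁)
    (hg2 : ∀ ξ, ∀ d ∈ D,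
      l ≤ |permOn (setRowCol M x (rad ∘ ξ)) (insert c (insert x A)) (insert x (insert d B))| →
      g ξ ≤ α₂) :
    𝔼 ξ, g ξ ≤ α₀ * (1 / 2) ^ D.card + (α₁ + α₂) / 2 := by
  have hrow := expect_ind_insert_row_lt_le M hxA hxB hxD hD hl
  have hboth := expect_ind_insert_both_lt_le M (A := A) (l := l) hxB hxD hcx hcA hcB hcD
  exact (expect_le_of_two_stages hrow hboth h0 h2 h21 hg0 (fun ξ ⟨d, hd, h⟩ => hg1 ξ d hd h)
    fun ξ ⟨d, hd, _, h⟩ => hg2 ξ d hd h).trans_eq (by ring)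

end extend

lemma second_difference_quadratic {ι : Type*} [Fintype ι] [DecidableEq ι] (a : ι → ι → ℝ) {p q : ι}
    (hpq : p ≠ q) (ξ : ι → Bool) :
    let Q (ζ : ι → Bool) : ℝ := ∑ s, ∑ r, rad (ζ s) * rad (ζ r) * a r s
    Q ξ - Q (flipOn {p} ξ) - Q (flipOn {q} ξ) + Q (flipOn {p, q} ξ) =
      4 * (rad (ξ p) * (rad (ξ q) * (a p q + a q p))) := by
  have entry (r s : ι) : rad (ξ s) * rad (ξ r) * a r s -
      rad (flipOn {p} ξ s) * rad (flipOn {p} ξ r) * a r s -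
      rad (flipOn {q} ξ s) * rad (flipOn {q} ξ r) * a r s +
      rad (flipOn {p, q} ξ s) * rad (flipOn {p, q} ξ r) * a r s =
      4 * (rad (ξ p) * rad (ξ q)) * ((if r = p then if s = q then a r s else 0 else 0) +
          if r = q then if s = p then a r s else 0 else 0) := by
    by_cases hrp : r = p <;> by_cases hrq : r = q <;> by_cases hsp : s = p <;>
      by_cases hsq : s = q <;> simp_all [flipOn, rad_not] <;> ring
  simp only [← sum_sub_distrib, ← sum_add_distrib, entry, ← mul_sum]
  simp only [sum_add_distrib, sum_ite_eq', mem_univ, if_true]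
  ring

/-- The coefficient of the entry at `(p, q)` in the permanent of the submatrix with row set `A` and
column set `B`. -/
noncomputable def cofactor {n : ℕ} (M : Matrix (Fin n) (Fin n) ℝ) (A B : Finset (Fin n))
    (p q : Fin n) : ℝ :=
  if p ∈ A ∧ q ∈ B then permOn M (A.erase p) (B.erase q) else 0

/-- The coefficient of `v p * v q` in the permanent of the submatrix of `setRowCol M x v` with row
set `insert x A` and column set `insert x B`. -/
noncomputable def pairCoeff {n : ℕ} (M : Matrix (Fin n) (Fin n) ℝ) (A B : Finset (Fin n))
    (p q : Fin n) : ℝ :=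
  cofactor M A B p q + cofactor M A B q p

lemma expect_ind_abs_permOn_lt_pairCoeff_le {n : ℕ} (M : Matrix (Fin n) (Fin n) ℝ)
    {A B : Finset (Fin n)} {x p q : Fin n} (hpq : p ≠ q) (hpx : p ≠ x) (hqx : q ≠ x) (hxA : x ∉ A)
    (hxB : x ∉ B) :
    𝔼 ξ : Fin n → Bool, ind (|permOn (setRowCol M x (rad ∘ ξ)) (insert x A) (insert x B)| <
      |pairCoeff M A B p q|) ≤ 3 / 4 := by
  refine expect_ind_le_of_three_flips {p} {q} {p, q} _ fun ξ h₀ h₁ h₂ h₃ => ?_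
  have expand (ζ : Fin n → Bool) (hζ : ζ x = ξ x) :
      permOn (setRowCol M x (rad ∘ ζ)) (insert x A) (insert x B) =
        rad (ξ x) * permOn M A B + ∑ s, ∑ r, rad (ζ s) * rad (ζ r) * cofactor M A B r s := by
    simp [permOn_setRowCol_insert_both _ _ hxA hxB, cofactor, hζ, ite_and]
  have hdiff := second_difference_quadratic (cofactor M A B) hpq ξ
  have habs := congrArg abs hdiff
  simp only [abs_mul, abs_rad, one_mul, Nat.abs_ofNat] at habs
  rw [expand _ rfl] at h₀
  rw [expand _ (flipOn_of_notMem (by simp [hpx.symm]) ξ)] at h₁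
  rw [expand _ (flipOn_of_notMem (by simp [hqx.symm]) ξ)] at h₂
  rw [expand _ (flipOn_of_notMem (by simp [hpx.symm, hqx.symm]) ξ)] at h₃
  refine habs.not_lt ?_
  rw [abs_lt] at *
  unfold pairCoeff at *
  constructor <;> linarith

/-! ### Making the columns almost contained in the rows -/

section pairCoeff
variable {n : ℕ} (M : Matrix (Fin n) (Fin n) ℝ) {A B X : Finset (Fin n)} {c d d' : Fin n}

lemma pairCoeff_insert_of_mem (hcB : c ∈ B) (hcA : c ∉ A) (hdA : d ∈ A) (hdB : d ∉ B) :
    pairCoeff M (insert c A) (insert d B) c d =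
      permOn M A B + permOn M ((insert c A).erase d) (insert d (B.erase c)) := by
  simp [pairCoeff, cofactor, hcB, hcA, hdA, hdB, erase_insert_of_ne (ne_of_mem_of_not_mem hdA hcA)]

lemma pairCoeff_insert_of_notMem (hcB : c ∈ B) (hcA : c ∉ A) (hdA : d ∉ A) (hdB : d ∉ B) :
    pairCoeff M (insert c A) (insert d B) c d = permOn M A B := by
  simp [pairCoeff, cofactor, hcA, hdA, hdB, (ne_of_mem_of_not_mem hcB hdB).symm]

lemma pairCoeff_insert_insert (hd : d ∈ A \ B) (hd' : d' ∈ A \ B) (hne : d ≠ d') :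
    pairCoeff M (insert c A) (insert d (insert d' (B.erase c))) d d' =
      permOn M ((insert c A).erase d) (insert d (B.erase c)) +
        permOn M ((insert c A).erase d') (insert d' (B.erase c)) := by
  rw [mem_sdiff] at hd hd'
  simp [pairCoeff, cofactor, hd, hd', hne, erase_insert_of_ne]

lemma abs_div_two_le_of_pairwise_sums (a b c : ℝ) :
    |a| / 2 ≤ |a + b| ∨ |a| / 2 ≤ |a + c| ∨ |a| / 2 ≤ |b + c| := by
  grind [abs_sub_le]

/-- A new row `c`, a set `B'` of columns and a pair `(p, q)` such that, upon adding a further random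
row and column, the coefficient of the pair is at least half of the current permanent. -/
def IsTarget (M : Matrix (Fin n) (Fin n) ℝ) (X A B : Finset (Fin n)) (c : Fin n)
    (B' : Finset (Fin n)) (p q : Fin n) : Prop :=
  B' ⊆ A ∪ B ∪ X ∧ B'.card = B.card + 1 ∧ p ≠ q ∧ p ∈ A ∪ B ∪ X ∧ q ∈ A ∪ B ∪ X ∧
    |permOn M A B| / 2 ≤ |pairCoeff M (insert c A) B' p q|

variable {M}

lemma isTarget_insert (hcB : c ∈ B) (hdB : d ∉ B) (hd : d ∈ A ∪ B ∪ X)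
    (h : |permOn M A B| / 2 ≤ |pairCoeff M (insert c A) (insert d B) c d|) :
    IsTarget M X A B c (insert d B) c d :=
  ⟨insert_subset hd (subset_union_right.trans subset_union_left), card_insert_of_notMem hdB,
    ne_of_mem_of_not_mem hcB hdB, by simp [hcB], hd, h⟩

lemma isTarget_insert_insert (hcB : c ∈ B) (hd : d ∈ A \ B) (hd' : d' ∈ A \ B) (hne : d ≠ d')
    (h : |permOn M A B| / 2 ≤
      |pairCoeff M (insert c A) (insert d (insert d' (B.erase c))) d d'|) :
    IsTarget M X A B c (insert d (insert d' (B.erase c))) d d' := by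
  rw [mem_sdiff] at hd hd'
  refine ⟨?_, ?_, hne, by simp [hd.1], by simp [hd'.1], h⟩
  · have : B.erase c ⊆ A ∪ B ∪ X :=
      (erase_subset c B).trans (subset_union_right.trans subset_union_left)
    exact insert_subset (by simp [hd.1]) (insert_subset (by simp [hd'.1]) this)
  · rw [card_insert_of_notMem (by simp [hne, hd.2]), card_insert_of_notMem (by simp [hd'.2]),
      card_erase_add_one hcB]

/-- With two candidates `d`, `d'` for the new column, three coefficients are available which are the
pairwise sums of three numbers, one of which is the current permanent. -/
lemma exists_isTarget_of_mem_sdiff (hcB : c ∈ B) (hcA : c ∉ A) (hd : d ∈ A \ B) (hd' : d' ∈ A \ B)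
    (hne : d ≠ d') : ∃ B' p q, IsTarget M X A B c B' p q := by
  have hA {e : Fin n} (he : e ∈ A \ B) : e ∈ A ∪ B ∪ X := by simp [(mem_sdiff.1 he).1]
  rcases abs_div_two_le_of_pairwise_sums (permOn M A B)
    (permOn M ((insert c A).erase d) (insert d (B.erase c)))
    (permOn M ((insert c A).erase d') (insert d' (B.erase c))) with h | h | h
  · rw [← pairCoeff_insert_of_mem M hcB hcA (mem_sdiff.1 hd).1 (mem_sdiff.1 hd).2] at h
    exact ⟨_, _, _, isTarget_insert hcB (mem_sdiff.1 hd).2 (hA hd) h⟩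
  · rw [← pairCoeff_insert_of_mem M hcB hcA (mem_sdiff.1 hd').1 (mem_sdiff.1 hd').2] at h
    exact ⟨_, _, _, isTarget_insert hcB (mem_sdiff.1 hd').2 (hA hd') h⟩
  · rw [← pairCoeff_insert_insert M hd hd' hne] at h
    exact ⟨_, _, _, isTarget_insert_insert hcB hd hd' hne h⟩

lemma exists_isTarget (hcB : c ∈ B) (hcA : c ∉ A) (hcX : c ∉ X) (hAX : Disjoint A X)
    (hcard : A.card = B.card) (hX : X.Nonempty) : ∃ B' p q, IsTarget M X A B c B' p q := by
  by_cases hd : ∃ d ∈ A \ B, ∃ d' ∈ A \ B, d ≠ d'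
  · obtain ⟨d, hd, d', hd', hne⟩ := hd
    exact exists_isTarget_of_mem_sdiff hcB hcA hd hd' hne
  · push Not at hd
    have hBA : (B \ A).card ≤ 1 := (card_sdiff_comm hcard).symm.trans_le (card_le_one.2 hd)
    obtain ⟨d, hdX⟩ := hX
    have hdA : d ∉ A := disjoint_right.1 hAX hdX
    have hdB : d ∉ B := fun h => hcX <| by
      rwa [card_le_one.1 hBA c (mem_sdiff.2 ⟨hcB, hcA⟩) d (mem_sdiff.2 ⟨h, hdA⟩)]
    refine ⟨_, _, _, isTarget_insert hcB hdB (by simp [hdX]) ?_⟩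
    rw [pairCoeff_insert_of_notMem M hcB hcA hdA hdB]
    exact half_le_self (abs_nonneg _)

end pairCoeff

/-- The state `s = (A, B)` is a heavy minor: row set `A` off `X`, column set `B`, both already
revealed, of equal size at least `a₀`. The required size of the permanent decreases by a factor `2`
with each revealed index. -/
def IsMinor {n : ℕ} (X : Finset (Fin n)) (a₀ : ℕ) (μ : ℝ) (P : Finset (Fin n))
    (M : Matrix (Fin n) (Fin n) ℝ) (s : Finset (Fin n) × Finset (Fin n)) : Prop :=
  s.1 ⊆ P \ X ∧ s.2 ⊆ P ∧ s.1.card = s.2.card ∧ a₀ ≤ s.1.card ∧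
    μ / 2 ^ P.card ≤ |permOn M s.1 s.2|

/-- The columns outside `X` that are not rows. -/
def extraCols {n : ℕ} (X : Finset (Fin n)) (s : Finset (Fin n) × Finset (Fin n)) :
    Finset (Fin n) := (s.2 \ s.1) \ X

/-- The potential of the column phase: it vanishes when there are no extra columns left and at least
halves whenever one of them disappears. -/
noncomputable def extraColsPotential {n : ℕ} (X : Finset (Fin n))
    (s : Finset (Fin n) × Finset (Fin n)) : ℝ := 2 ^ (extraCols X s).card - 1

section columns
variable {n : ℕ} {X P : Finset (Fin n)} {a₀ : ℕ} {μ : ℝ} {M : Matrix (Fin n) (Fin n) ℝ}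
  {x c : Fin n} {s : Finset (Fin n) × Finset (Fin n)}

lemma div_two_pow_card_insert (hx : x ∉ P) (μ : ℝ) :
    μ / 2 ^ (insert x P).card = μ / 2 ^ P.card / 2 := by
  rw [card_insert_of_notMem hx, pow_succ, div_div]

lemma isMinor_adapted (hμ : 0 ≤ μ) : Adapted (IsMinor X a₀ μ) where
  setRowCol_iff {P M x} v {s} hx := and_congr_right fun hA => and_congr_right fun hB => by
    rw [permOn_setRowCol M v (notMem_mono (hA.trans sdiff_subset) hx) (notMem_mono hB hx)]
  insert {P M x s} hx h := by
    refine ⟨h.1.trans (sdiff_subset_sdiff (subset_insert _ _) subset_rfl),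
      h.2.1.trans (subset_insert _ _), h.2.2.1, h.2.2.2.1, ?_⟩
    rw [div_two_pow_card_insert hx]
    exact (half_le_self (by positivity)).trans h.2.2.2.2

lemma IsMinor.of_insert_both {N : Matrix (Fin n) (Fin n) ℝ} {A B : Finset (Fin n)} (hx : x ∉ P)
    (hxX : x ∉ X) (hA : A ⊆ P \ X) (hB : B ⊆ P) (hcard : A.card = B.card) (ha₀ : a₀ ≤ A.card)
    (h : μ / 2 ^ P.card / 2 ≤ |permOn N (insert x A) (insert x B)|) :
    IsMinor X a₀ μ (insert x P) N (insert x A, insert x B) := by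
  have hxA : x ∉ A := notMem_mono (hA.trans sdiff_subset) hx
  refine ⟨?_, insert_subset_insert x hB, ?_, ?_, (div_two_pow_card_insert hx μ).trans_le h⟩
  · rw [insert_sdiff_of_notMem P hxX]
    exact insert_subset_insert x hA
  · rw [card_insert_of_notMem hxA, card_insert_of_notMem (notMem_mono hB hx), hcard]
  · exact ha₀.trans (card_le_card (subset_insert x A))

lemma extraColsPotential_nonneg (s : Finset (Fin n) × Finset (Fin n)) :
    0 ≤ extraColsPotential X s := sub_nonneg.2 (one_le_pow₀ one_le_two)

lemma extraColsPotential_insert_insert_le {A B B' : Finset (Fin n)}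
    (hB' : B' ⊆ A ∪ B ∪ X) (hc : c ∈ extraCols X (A, B)) :
    extraColsPotential X (insert x (insert c A), insert x B') ≤
      (extraColsPotential X (A, B) - 1) / 2 := by
  have hsub : extraCols X (insert x (insert c A), insert x B') ⊆ (extraCols X (A, B)).erase c := by
    intro y hy
    have := @hB' y
    simp only [extraCols, mem_sdiff, mem_insert, mem_erase, mem_union] at *
    tauto
  have hcard : (extraCols X (insert x (insert c A), insert x B')).card + 1 ≤
      (extraCols X (A, B)).card := by
    rw [← card_erase_add_one hc]
    exact Nat.succ_le_succ (card_le_card hsub)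
  have := pow_le_pow_right₀ (one_le_two (α := ℝ)) hcard
  rw [pow_succ] at this
  unfold extraColsPotential
  linarith

lemma one_le_extraColsPotential (h : ¬s.2 ⊆ s.1 ∪ X) : 1 ≤ extraColsPotential X s := by
  obtain ⟨y, hy, hy'⟩ := not_subset.1 h
  rw [mem_union, not_or] at hy'
  have : 0 < (extraCols X s).card := card_pos.2 ⟨y, by simp [extraCols, hy, hy']⟩
  have := pow_le_pow_right₀ (one_le_two (α := ℝ)) this
  unfold extraColsPotential
  linarith

lemma IsMinor.extraColsPotential_le (h : IsMinor X a₀ μ P M s) (hXP : X ⊆ P) {k : ℕ}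
    (hk : P.card ≤ X.card + a₀ + k) : extraColsPotential X s ≤ 2 ^ k := by
  obtain ⟨hA, hB, -, ha₀, -⟩ := h
  have hsub : extraCols X s ⊆ (P \ X) \ s.1 := by
    rw [extraCols, sdiff_right_comm]
    exact sdiff_subset_sdiff (sdiff_subset_sdiff hB subset_rfl) subset_rfl
  have hcard := card_le_card hsub
  rw [card_sdiff_of_subset hA, card_sdiff_of_subset hXP] at hcard
  have := pow_le_pow_right₀ (one_le_two (α := ℝ)) (show (extraCols X s).card ≤ k by omega)
  unfold extraColsPotential
  linarith

lemma IsMinor.exists_expect_ind_not_insert_both_le (h : IsMinor X a₀ μ P M s) (hX : X.Nonempty)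
    (hXP : X ⊆ P) (hx : x ∉ P) (hc : c ∈ extraCols X s) :
    ∃ B' ⊆ s.1 ∪ s.2 ∪ X,
      𝔼 ξ : Fin n → Bool, ind (¬IsMinor X a₀ μ (insert x P) (setRowCol M x (rad ∘ ξ))
        (insert x (insert c s.1), insert x B')) ≤ 3 / 4 := by
  obtain ⟨A, B⟩ := s
  obtain ⟨hA, hB, hcard, ha₀, hheavy⟩ := h
  obtain ⟨⟨hcB, hcA⟩, hcX⟩ : (c ∈ B ∧ c ∉ A) ∧ c ∉ X := by simpa [extraCols] using hc
  obtain ⟨B', p, q, hB', hcardB', hpq, hp, hq, hbig⟩ :=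
    exists_isTarget hcB hcA hcX (disjoint_of_subset_left hA sdiff_disjoint) hcard hX (M := M)
  have hU : A ∪ B ∪ X ⊆ P := union_subset (union_subset (hA.trans sdiff_subset) hB) hXP
  have hA' : insert c A ⊆ P \ X := insert_subset (mem_sdiff.2 ⟨hB hcB, hcX⟩) hA
  have hcard' : (insert c A).card = B'.card := by rw [card_insert_of_notMem hcA, hcardB', hcard]
  have hquad := expect_ind_abs_permOn_lt_pairCoeff_le M hpq (ne_of_mem_of_not_mem (hU hp) hx)
    (ne_of_mem_of_not_mem (hU hq) hx) (notMem_mono (hA'.trans sdiff_subset) hx)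
    (notMem_mono (hB'.trans hU) hx)
  refine ⟨B', hB', (expect_le_expect fun ξ _ => ind_mono fun hbad => ?_).trans hquad⟩
  contrapose! hbad
  exact .of_insert_both hx (notMem_mono hXP hx) hA' (hB'.trans hU) hcard'
    (ha₀.trans (card_le_card (subset_insert c A))) (by linarith)

/-- With probability at least one quarter a new index `x` removes an extra column `c`, by adding `c`
as a row together with the row and column `x`; otherwise the old minor is kept. -/
lemma cols_step (hμ : 0 ≤ μ) (hX : X.Nonempty) (hXP : X ⊆ P) (hx : x ∉ P)
    (h : IsMinor X a₀ μ P M s) :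
    𝔼 ξ : Fin n → Bool, best (IsMinor X a₀ μ (insert x P) (setRowCol M x (rad ∘ ξ)))
      (extraColsPotential X) ≤ 7 / 8 * extraColsPotential X s := by
  set v := extraColsPotential X s
  have stay (ξ : Fin n → Bool) : best (IsMinor X a₀ μ (insert x P) (setRowCol M x (rad ∘ ξ)))
      (extraColsPotential X) ≤ v :=
    best_le extraColsPotential_nonneg ((isMinor_adapted hμ).insert_setRowCol hx h _)
  rcases (extraCols X s).eq_empty_or_nonempty with hE | ⟨c, hc⟩
  · have hv0 : v = 0 := by simp [v, extraColsPotential, hE]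
    rw [hv0, mul_zero, ← hv0]
    exact (expect_le_expect fun ξ _ => stay ξ).trans_eq (Fintype.expect_const v)
  obtain ⟨B', hB', hfail⟩ := h.exists_expect_ind_not_insert_both_le hX hXP hx hc
  have pointwise (ξ : Fin n → Bool) :
      best (IsMinor X a₀ μ (insert x P) (setRowCol M x (rad ∘ ξ))) (extraColsPotential X) ≤
        (v - 1) / 2 + (v + 1) / 2 * ind (¬IsMinor X a₀ μ (insert x P) (setRowCol M x (rad ∘ ξ))
          (insert x (insert c s.1), insert x B')) := by
    by_cases hf : IsMinor X a₀ μ (insert x P) (setRowCol M x (rad ∘ ξ))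
        (insert x (insert c s.1), insert x B')
    · rw [ind_of_false (not_not.2 hf), mul_zero, add_zero]
      exact (best_le extraColsPotential_nonneg hf).trans
        (extraColsPotential_insert_insert_le hB' hc)
    · rw [ind_of_true hf]
      linarith [stay ξ]
  have : 0 ≤ v := extraColsPotential_nonneg _
  refine (expect_le_expect fun ξ _ => pointwise ξ).trans ?_
  rw [expect_add_distrib, ← mul_expect, Fintype.expect_const]
  nlinarith

lemma cols_phase (hμ : 0 ≤ μ) (hX : X.Nonempty) (hXP : X ⊆ P) {F : Finset (Fin n)}
    (hdisj : Disjoint P F) {k : ℕ} (hk : P.card ≤ X.card + a₀ + k) :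
    𝔼 ω, ind ((∃ s, IsMinor X a₀ μ P (symMat n ω) s) ∧
      ¬∃ s, IsMinor X a₀ μ (P ∪ F) (symMat n ω) s ∧ s.2 ⊆ s.1 ∪ X) ≤
        (7 / 8) ^ F.card * 2 ^ k := by
  have hrun := expect_best_union_le (valid := IsMinor X a₀ μ) (V := fun _ => extraColsPotential X)
    (isMinor_adapted hμ) hdisj (κ := 7 / 8) (by norm_num) le_rfl fun P' M x s hP _ hx h =>
      (cols_step hμ hX (hXP.trans hP) hx h).trans_eq (add_zero _).symm
  have hstart := expect_best_le (valid := IsMinor X a₀ μ) (V := fun _ => extraColsPotential X)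
    extraColsPotential_nonneg (by positivity) fun M s h => h.extraColsPotential_le hXP hk
  have hmarkov := mul_expect_ind_le_expect_best (V := fun _ => extraColsPotential X)
    (isMinor_adapted hμ) hdisj extraColsPotential_nonneg (K := 1)
    (good := fun M => ∃ s, IsMinor X a₀ μ (P ∪ F) M s ∧ s.2 ⊆ s.1 ∪ X)
    fun M s hs hbad => one_le_extraColsPotential fun h => hbad ⟨s, hs, h⟩
  rw [one_mul] at hmarkov
  rw [zero_mul, add_zero] at hrun
  exact hmarkov.trans (hrun.trans (by gcongr))

end columns

/-! ### Adding rows -/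

/-- The state `s = (A, B)` is a heavy minor whose columns lie in `A ∪ X`, as they do in the minor
`(Xᶜ, B)` sought. -/
def IsNested {n : ℕ} (X : Finset (Fin n)) (a₀ : ℕ) (μ : ℝ) (P : Finset (Fin n))
    (M : Matrix (Fin n) (Fin n) ℝ) (s : Finset (Fin n) × Finset (Fin n)) : Prop :=
  IsMinor X a₀ μ P M s ∧ s.2 ⊆ s.1 ∪ X

/-- The columns available for extending a nested minor. -/
def freeCols {n : ℕ} (X : Finset (Fin n)) (s : Finset (Fin n) × Finset (Fin n)) :
    Finset (Fin n) := (s.1 ∪ X) \ s.2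

/-- The revealed indices outside `X` that are not rows yet. -/
def missing {n : ℕ} (X P : Finset (Fin n)) (s : Finset (Fin n) × Finset (Fin n)) :
    Finset (Fin n) := (P \ X) \ s.1

section nested
variable {n : ℕ} {X P : Finset (Fin n)} {a₀ : ℕ} {μ : ℝ} {M N : Matrix (Fin n) (Fin n) ℝ}
  {x c d : Fin n} {A B D : Finset (Fin n)} {s : Finset (Fin n) × Finset (Fin n)}

lemma isNested_adapted (hμ : 0 ≤ μ) : Adapted (IsNested X a₀ μ) where
  setRowCol_iff v _ hx := and_congr_left fun _ => (isMinor_adapted hμ).setRowCol_iff v hx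
  insert hx h := ⟨(isMinor_adapted hμ).insert hx h.1, h.2⟩

lemma IsNested.rows_subset (h : IsNested X a₀ μ P M s) : s.1 ⊆ P := h.1.1.trans sdiff_subset

lemma IsNested.freeCols_subset (h : IsNested X a₀ μ P M s) (hXP : X ⊆ P) : freeCols X s ⊆ P :=
  sdiff_subset.trans (union_subset h.rows_subset hXP)

lemma IsNested.card_freeCols (h : IsNested X a₀ μ P M s) : (freeCols X s).card = X.card := by
  rw [freeCols, card_sdiff_of_subset h.2,
    card_union_of_disjoint (disjoint_of_subset_left h.1.1 sdiff_disjoint), h.1.2.2.1,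
    Nat.add_sub_cancel_left]

lemma IsNested.card_missing (h : IsNested X a₀ μ P M s) (hXP : X ⊆ P) :
    (missing X P s).card = P.card - X.card - s.1.card := by
  rw [missing, card_sdiff_of_subset h.1.1, card_sdiff_of_subset hXP]

lemma notMem_union_of_mem_missing (hc : c ∈ missing X P s) : c ∉ s.1 ∪ X := by
  simp_all [missing]

lemma IsNested.insert_row (h : IsNested X a₀ μ P M (A, B)) (hμ : 0 ≤ μ) (hXP : X ⊆ P) (hx : x ∉ P)
    (hd : d ∈ freeCols X (A, B)) (hbig : μ / 2 ^ P.card ≤ |permOn N (insert x A) (insert d B)|) :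
    IsNested X a₀ μ (insert x P) N (insert x A, insert d B) := by
  have hdP := h.freeCols_subset hXP hd
  have hxA : x ∉ A := notMem_mono h.rows_subset hx
  obtain ⟨⟨hA, hB, hcard, ha₀, -⟩, hBA⟩ := h
  obtain ⟨hdA, hdB⟩ := mem_sdiff.1 hd
  refine ⟨⟨?_, ?_, ?_, ?_, ?_⟩, ?_⟩
  · rw [insert_sdiff_of_notMem P (notMem_mono hXP hx)]
    exact insert_subset_insert x hA
  · exact (insert_subset hdP hB).trans (subset_insert x P)
  · rw [card_insert_of_notMem hxA, card_insert_of_notMem hdB, hcard]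
  · exact ha₀.trans (card_le_card (subset_insert x A))
  · rw [div_two_pow_card_insert hx]
    exact (half_le_self (by positivity)).trans hbig
  · rw [insert_union]
    exact (insert_subset hdA hBA).trans (subset_insert x _)

lemma IsNested.insert_both (h : IsNested X a₀ μ P M (A, B)) (hμ : 0 ≤ μ) (hXP : X ⊆ P) (hx : x ∉ P)
    (hd : d ∈ freeCols X (A, B)) (hc : c ∈ missing X P (A, B))
    (hbig : μ / 2 ^ P.card ≤ |permOn N (insert c (insert x A)) (insert x (insert d B))|) :
    IsNested X a₀ μ (insert x P) N (insert c (insert x A), insert x (insert d B)) := by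
  have hdP := h.freeCols_subset hXP hd
  obtain ⟨⟨hA, hB, hcard, ha₀, -⟩, hBA⟩ := h
  obtain ⟨hdA, hdB⟩ := mem_sdiff.1 hd
  obtain ⟨hcP, hcA⟩ := mem_sdiff.1 hc
  rw [insert_comm c x] at hbig ⊢
  constructor
  · refine .of_insert_both hx (notMem_mono hXP hx) (insert_subset hcP hA) (insert_subset hdP hB) ?_
      (ha₀.trans (card_le_card (subset_insert c A)))
      ((half_le_self (by positivity)).trans hbig)
    rw [card_insert_of_notMem hcA, card_insert_of_notMem hdB, hcard]
  · rw [insert_union, insert_union]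
    exact insert_subset_insert x ((insert_subset hdA hBA).trans (subset_insert c _))

lemma IsNested.expect_ind_not_insert_row_le (h : IsNested X a₀ μ P M (A, B)) (hμ : 0 ≤ μ)
    (hXP : X ⊆ P) (hx : x ∉ P) (hD : D ⊆ freeCols X (A, B)) :
    𝔼 ξ : Fin n → Bool, ind (¬∃ d ∈ D,
      IsNested X a₀ μ (insert x P) (setRowCol M x (rad ∘ ξ)) (insert x A, insert d B)) ≤
        (1 / 2) ^ D.card := by
  refine le_trans (expect_le_expect fun ξ _ => ind_mono (mt ?_))
    (expect_ind_insert_row_lt_le M (notMem_mono h.rows_subset hx) (notMem_mono h.1.2.1 hx)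
      (notMem_mono (hD.trans (h.freeCols_subset hXP)) hx)
      (disjoint_of_subset_left hD sdiff_disjoint) h.1.2.2.2.2)
  rintro ⟨d, hd, hbig⟩
  exact ⟨d, hd, h.insert_row hμ hXP hx (hD hd) hbig⟩

lemma IsNested.expect_le_of_row_or_both (h : IsNested X a₀ μ P M (A, B)) (hμ : 0 ≤ μ)
    (hXP : X ⊆ P) (hx : x ∉ P) (hc : c ∈ missing X P (A, B)) {g : (Fin n → Bool) → ℝ}
    {α₀ α₁ α₂ : ℝ} (h0 : 0 ≤ α₀) (h2 : 0 ≤ α₂) (h21 : α₂ ≤ α₁) (hg0 : ∀ ξ, g ξ ≤ α₀)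
    (hg1 : ∀ ξ d, d ∈ freeCols X (A, B) →
      IsNested X a₀ μ (insert x P) (setRowCol M x (rad ∘ ξ)) (insert x A, insert d B) → g ξ ≤ α₁)
    (hg2 : ∀ ξ d, IsNested X a₀ μ (insert x P) (setRowCol M x (rad ∘ ξ))
      (insert c (insert x A), insert x (insert d B)) → g ξ ≤ α₂) :
    𝔼 ξ, g ξ ≤ α₀ * (1 / 2) ^ X.card + (α₁ + α₂) / 2 := by
  have hcP : c ∈ P := (mem_sdiff.1 (mem_sdiff.1 hc).1).1
  have hcAX := notMem_union_of_mem_missing hc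
  rw [← h.card_freeCols]
  exact expect_le_of_insert_row_or_both M (notMem_mono h.rows_subset hx)
    (notMem_mono h.1.2.1 hx) (notMem_mono (h.freeCols_subset hXP) hx) sdiff_disjoint h.1.2.2.2.2
    (ne_of_mem_of_not_mem hcP hx) (notMem_mono subset_union_left hcAX) (notMem_mono h.2 hcAX)
    (notMem_mono sdiff_subset hcAX) h0 h2 h21 hg0
    (fun ξ d hd hbig => hg1 ξ d hd (h.insert_row hμ hXP hx hd hbig))
    fun ξ d hd hbig => hg2 ξ d (h.insert_both hμ hXP hx hd hc hbig)

lemma card_missing_insert_le : (missing X (insert x P) s).card ≤ (missing X P s).card + 1 := by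
  refine (card_le_card (t := insert x (missing X P s)) fun y hy => ?_).trans (card_insert_le _ _)
  simp only [missing, mem_sdiff, mem_insert] at hy ⊢
  tauto

lemma card_missing_insert_row_le (B' : Finset (Fin n)) :
    (missing X (insert x P) (insert x A, B')).card ≤ (missing X P (A, B)).card := by
  refine card_le_card fun y hy => ?_
  simp only [missing, mem_sdiff, mem_insert] at hy ⊢
  tauto

lemma card_missing_insert_both_lt (B' : Finset (Fin n)) (hc : c ∈ missing X P (A, B)) :
    (missing X (insert x P) (insert c (insert x A), B')).card < (missing X P (A, B)).card := by
  refine (card_le_card fun y hy => ?_).trans_lt (card_erase_lt_of_mem hc)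
  simp only [missing, mem_sdiff, mem_insert, mem_erase] at hy ⊢
  tauto

/-- A new index `x` is added to the rows by means of a free column, and with probability about one
half a missing row `c` is absorbed as well, using the column `x`. -/
lemma rows_step (hμ : 0 ≤ μ) (hXP : X ⊆ P) (hX : 7 ≤ X.card) (hx : x ∉ P)
    (h : IsNested X a₀ μ P M s) :
    𝔼 ξ : Fin n → Bool, best (IsNested X a₀ μ (insert x P) (setRowCol M x (rad ∘ ξ)))
      (fun s => (9 / 4) ^ (missing X (insert x P) s).card) ≤
        3 / 4 * (9 / 4) ^ (missing X P s).card + 3 / 2 := by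
  obtain ⟨A, B⟩ := s
  set v : ℝ := (9 / 4) ^ (missing X P (A, B)).card with hv
  have hv0 : 0 < v := by positivity
  have stay (ξ : Fin n → Bool) :
      best (IsNested X a₀ μ (insert x P) (setRowCol M x (rad ∘ ξ)))
        (fun s => (9 / 4) ^ (missing X (insert x P) s).card) ≤ 9 / 4 * v := by
    refine (best_le (fun _ => by positivity)
      ((isNested_adapted hμ).insert_setRowCol hx h _)).trans ?_
    rw [hv, ← pow_succ']
    exact pow_le_pow_right₀ (by norm_num) card_missing_insert_le
  rcases (missing X P (A, B)).eq_empty_or_nonempty with hE | ⟨c, hc⟩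
  · refine (expect_le_expect fun ξ _ => stay ξ).trans ?_
    rw [Fintype.expect_const, hv, hE]
    norm_num
  refine (h.expect_le_of_row_or_both hμ hXP hx hc (α₀ := 9 / 4 * v) (α₁ := v)
    (α₂ := 4 / 9 * v) (by positivity) (by positivity) (by linarith) stay ?_ ?_).trans ?_
  · intro ξ d _ hrow
    exact (best_le (fun _ => by positivity) hrow).trans
      (pow_le_pow_right₀ (by norm_num) (card_missing_insert_row_le _))
  · intro ξ d hboth
    refine (best_le (fun _ => by positivity) hboth).trans ?_
    have := pow_le_pow_right₀ (by norm_num : (1 : ℝ) ≤ 9 / 4)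
      (card_missing_insert_both_lt (x := x) (insert x (insert d B)) hc)
    rw [pow_succ, ← hv] at this
    linarith
  · have := mul_le_mul_of_nonneg_left
      (pow_le_pow_of_le_one (by norm_num : (0 : ℝ) ≤ 1 / 2) (by norm_num) hX) hv0.le
    linarith

/-- After enough further rows, the number of missing rows of the best nested minor has a bounded
exponential moment. -/
lemma rows_phase (hμ : 0 ≤ μ) (hXP : X ⊆ P) (hX : 7 ≤ X.card) {F : Finset (Fin n)}
    (hdisj : Disjoint P F) {k : ℕ} (hk : P.card ≤ X.card + a₀ + k) :
    𝔼 ω, ind (∃ s, IsNested X a₀ μ P (symMat n ω) s) *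
      best (IsNested X a₀ μ (P ∪ F) (symMat n ω))
        (fun s => (9 / 4) ^ (missing X (P ∪ F) s).card) ≤
          (3 / 4) ^ F.card * (9 / 4) ^ k + 6 := by
  have hrun := expect_best_union_le (valid := IsNested X a₀ μ)
    (V := fun P s => (9 / 4) ^ (missing X P s).card) (isNested_adapted hμ) hdisj
    (κ := 3 / 4) (b := 3 / 2) (by norm_num) (by norm_num) fun P' M x s hP _ hx h =>
      rows_step hμ (hXP.trans hP) hX hx h
  have hstart := expect_best_le (valid := IsNested X a₀ μ) (P₀ := P)
    (V := fun P s => (9 / 4) ^ (missing X P s).card) (V₀ := (9 / 4) ^ k)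
    (fun _ => by positivity) (by positivity) fun M s h => by
      refine pow_le_pow_right₀ (by norm_num) ?_
      have := h.1.2.2.2.1
      rw [h.card_missing hXP]
      omega
  have hgeom : (3 / 2 : ℝ) * ∑ i ∈ range F.card, (3 / 4 : ℝ) ^ i ≤ 6 := by
    have := mul_neg_geom_sum (3 / 4 : ℝ) F.card
    have := pow_nonneg (by norm_num : (0 : ℝ) ≤ 3 / 4) F.card
    linarith
  exact hrun.trans (add_le_add (by gcongr) hgeom)

end nested

/-! ### Steering the unused columns into `Y` -/

/-- The valid states of the last phase: the nested minors and the failure state `none`. -/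
def IsNestedOrNone {n : ℕ} (X : Finset (Fin n)) (a₀ : ℕ) (μ : ℝ) (P : Finset (Fin n))
    (M : Matrix (Fin n) (Fin n) ℝ) (s : Option (Finset (Fin n) × Finset (Fin n))) : Prop :=
  ∀ t ∈ s, IsNested X a₀ μ P M t

/-- The work left to do: each missing row counts twice, as absorbing it may create a free column
outside `Y`; each free column outside `Y` counts once. -/
def work {n : ℕ} (X Y P : Finset (Fin n)) (s : Finset (Fin n) × Finset (Fin n)) : ℕ :=
  2 * (missing X P s).card + (freeCols X s \ Y).card

/-- The potential of the last phase. It is `1` at the failure state, and vanishes at a minor exactly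
when no work is left. The factor `5 / 6` for each index of `Y` still to come absorbs the average
growth of `(3 / 2) ^ work`, so that the potential is a supermartingale up to an additive error. -/
noncomputable def lastPotential {n : ℕ} (X Y P : Finset (Fin n)) :
    Option (Finset (Fin n) × Finset (Fin n)) → ℝ
  | none => 1
  | some s => ((3 / 2) ^ work X Y P s - 1) * (5 / 6) ^ (Y \ P).card

section last
variable {n : ℕ} {X Y P : Finset (Fin n)} {a₀ : ℕ} {μ : ℝ} {M : Matrix (Fin n) (Fin n) ℝ}
  {x c d : Fin n} {A B : Finset (Fin n)} {s : Finset (Fin n) × Finset (Fin n)}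

lemma isNestedOrNone_none : IsNestedOrNone X a₀ μ P M none := by simp [IsNestedOrNone]

lemma isNestedOrNone_some : IsNestedOrNone X a₀ μ P M (some s) ↔ IsNested X a₀ μ P M s := by
  simp [IsNestedOrNone]

lemma isNestedOrNone_adapted (hμ : 0 ≤ μ) : Adapted (IsNestedOrNone X a₀ μ) where
  setRowCol_iff v _ hx := forall₂_congr fun _ _ => (isNested_adapted hμ).setRowCol_iff v hx
  insert hx h t ht := (isNested_adapted hμ).insert hx (h t ht)

lemma lastPotential_nonneg (s : Option (Finset (Fin n) × Finset (Fin n))) :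
    0 ≤ lastPotential X Y P s := by
  cases s with
  | none => exact zero_le_one
  | some s => exact mul_nonneg (sub_nonneg.2 (one_le_pow₀ (by norm_num))) (by positivity)

lemma best_lastPotential_le_one :
    best (IsNestedOrNone X a₀ μ P M) (lastPotential X Y P) ≤ 1 :=
  best_le lastPotential_nonneg isNestedOrNone_none

lemma five_sixths_pow_card_sdiff_insert (hxY : x ∈ Y) (hx : x ∉ P) :
    (5 / 6 : ℝ) ^ (Y \ insert x P).card = 6 / 5 * (5 / 6) ^ (Y \ P).card := by
  rw [sdiff_insert, ← card_erase_add_one (mem_sdiff.2 ⟨hxY, hx⟩), pow_succ]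
  ring

lemma IsNested.best_lastPotential_le (h : IsNested X a₀ μ (insert x P) M s) (hxY : x ∈ Y)
    (hx : x ∉ P) {k : ℕ} (hk : work X Y (insert x P) s ≤ k) :
    best (IsNestedOrNone X a₀ μ (insert x P) M) (lastPotential X Y (insert x P)) ≤
      ((3 / 2) ^ k - 1) * (6 / 5 * (5 / 6) ^ (Y \ P).card) := by
  refine (best_le (s := some s) lastPotential_nonneg (isNestedOrNone_some.2 h)).trans ?_
  rw [lastPotential, five_sixths_pow_card_sdiff_insert hxY hx]
  gcongr
  norm_num

lemma freeCols_insert_row_sdiff_subset (hxY : x ∈ Y) :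
    freeCols X (insert x A, insert d B) \ Y ⊆ (freeCols X (A, B) \ Y).erase d := by
  intro y hy
  simp only [freeCols, mem_sdiff, mem_union, mem_insert, mem_erase] at hy ⊢
  have : y ≠ x := fun h => hy.2 (h ▸ hxY)
  tauto

lemma work_insert_row_le (hxY : x ∈ Y) :
    work X Y (insert x P) (insert x A, insert d B) ≤ work X Y P (A, B) := by
  have hfree := (freeCols_insert_row_sdiff_subset (X := X) (A := A) (B := B) (d := d) hxY).trans
    (erase_subset _ _)
  exact add_le_add (Nat.mul_le_mul_left 2 (card_missing_insert_row_le _)) (card_le_card hfree)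

lemma work_insert_row_lt (hxY : x ∈ Y) (hd : d ∈ freeCols X (A, B) \ Y) :
    work X Y (insert x P) (insert x A, insert d B) < work X Y P (A, B) :=
  add_lt_add_of_le_of_lt (Nat.mul_le_mul_left 2 (card_missing_insert_row_le _))
    ((card_le_card (freeCols_insert_row_sdiff_subset hxY)).trans_lt (card_erase_lt_of_mem hd))

lemma work_insert_both_lt (hfree : freeCols X (A, B) \ Y = ∅) (hc : c ∈ missing X P (A, B)) :
    work X Y (insert x P) (insert c (insert x A), insert x (insert d B)) < work X Y P (A, B) := by
  have hnew : freeCols X (insert c (insert x A), insert x (insert d B)) \ Y ⊆ {c} := by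
    intro y hy
    have := Finset.ext_iff.1 hfree y
    simp only [freeCols, mem_sdiff, mem_union, mem_insert, mem_singleton, notMem_empty] at *
    tauto
  have := (card_le_card hnew).trans_eq (card_singleton c)
  have := card_missing_insert_both_lt (x := x) (insert x (insert d B)) hc
  unfold work
  omega

lemma average_potential_le (k : ℕ) {z : ℝ} (hz : 0 ≤ z) :
    (((3 / 2) ^ (k + 1) - 1) * (6 / 5 * z) + ((3 / 2) ^ k - 1) * (6 / 5 * z)) / 2 ≤
      ((3 / 2) ^ (k + 1) - 1) * z := by
  rw [pow_succ]
  linarith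

lemma IsNested.last_step_of_free (h : IsNested X a₀ μ P M (A, B)) (hμ : 0 ≤ μ) (hXP : X ⊆ P)
    (hxY : x ∈ Y) (hx : x ∉ P) (hd : d ∈ freeCols X (A, B) \ Y) :
    𝔼 ξ : Fin n → Bool, best (IsNestedOrNone X a₀ μ (insert x P) (setRowCol M x (rad ∘ ξ)))
      (lastPotential X Y (insert x P)) ≤
        lastPotential X Y P (some (A, B)) + (1 / 2) ^ X.card := by
  have hlt := work_insert_row_lt (P := P) hxY hd
  obtain ⟨k, hk⟩ := Nat.exists_eq_add_one_of_ne_zero (Nat.ne_zero_of_lt hlt)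
  have hR : (1 : ℝ) ≤ (3 / 2) ^ k := one_le_pow₀ (by norm_num)
  have hrow := h.expect_ind_not_insert_row_le hμ hXP hx subset_rfl
  have hrow_d := h.expect_ind_not_insert_row_le hμ hXP hx
      (singleton_subset_iff.2 (mem_sdiff.1 hd).1)
  simp only [mem_singleton, exists_eq_left, card_singleton, pow_one] at hrow_d
  refine (expect_le_of_two_stages (α₀ := 1)
    (α₁ := ((3 / 2) ^ (k + 1) - 1) * (6 / 5 * (5 / 6) ^ (Y \ P).card))
    (α₂ := ((3 / 2) ^ k - 1) * (6 / 5 * (5 / 6) ^ (Y \ P).card)) hrow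
    ((expect_le_expect fun ξ _ => ind_mono And.right).trans hrow_d) zero_le_one
    (mul_nonneg (by linarith) (by positivity)) ?_ (fun _ => best_lastPotential_le_one) ?_ ?_).trans
      ?_
  · gcongr
    · norm_num
    · omega
  · rintro ξ ⟨d', -, hrow⟩
    exact hrow.best_lastPotential_le hxY hx (hk ▸ work_insert_row_le hxY)
  · intro ξ hrow
    exact hrow.best_lastPotential_le hxY hx (by omega)
  · have := average_potential_le k (by positivity : (0 : ℝ) ≤ (5 / 6) ^ (Y \ P).card)
    rw [lastPotential, h.card_freeCols, hk]
    linarith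

lemma IsNested.last_step_of_missing (h : IsNested X a₀ μ P M (A, B)) (hμ : 0 ≤ μ) (hXP : X ⊆ P)
    (hxY : x ∈ Y) (hx : x ∉ P) (hfree : freeCols X (A, B) \ Y = ∅) (hc : c ∈ missing X P (A, B)) :
    𝔼 ξ : Fin n → Bool, best (IsNestedOrNone X a₀ μ (insert x P) (setRowCol M x (rad ∘ ξ)))
      (lastPotential X Y (insert x P)) ≤
        lastPotential X Y P (some (A, B)) + (1 / 2) ^ X.card := by
  have hlt (d : Fin n) := work_insert_both_lt (x := x) (d := d) hfree hc
  obtain ⟨k, hk⟩ := Nat.exists_eq_add_one_of_ne_zero (Nat.ne_zero_of_lt (hlt c))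
  have hR : (1 : ℝ) ≤ (3 / 2) ^ k := one_le_pow₀ (by norm_num)
  refine (h.expect_le_of_row_or_both hμ hXP hx hc (α₀ := 1)
    (α₁ := ((3 / 2) ^ (k + 1) - 1) * (6 / 5 * (5 / 6) ^ (Y \ P).card))
    (α₂ := ((3 / 2) ^ k - 1) * (6 / 5 * (5 / 6) ^ (Y \ P).card)) zero_le_one
    (mul_nonneg (by linarith) (by positivity)) ?_ (fun _ => best_lastPotential_le_one) ?_ ?_).trans
      ?_
  · gcongr
    · norm_num
    · omega
  · intro ξ d _ hrow
    exact hrow.best_lastPotential_le hxY hx (hk ▸ work_insert_row_le hxY)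
  · intro ξ d hboth
    exact hboth.best_lastPotential_le hxY hx (by have := hlt d; omega)
  · have := average_potential_le k (by positivity : (0 : ℝ) ≤ (5 / 6) ^ (Y \ P).card)
    rw [lastPotential, hk]
    linarith

lemma IsNested.last_step_of_work_eq_zero (h : IsNested X a₀ μ P M (A, B)) (hμ : 0 ≤ μ)
    (hXP : X ⊆ P) (hxY : x ∈ Y) (hx : x ∉ P) (hwork : work X Y P (A, B) = 0) :
    𝔼 ξ : Fin n → Bool, best (IsNestedOrNone X a₀ μ (insert x P) (setRowCol M x (rad ∘ ξ)))
      (lastPotential X Y (insert x P)) ≤ (1 / 2) ^ X.card := by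
  rw [← h.card_freeCols]
  refine le_trans (expect_le_expect fun ξ _ => ?_)
    (h.expect_ind_not_insert_row_le hμ hXP hx subset_rfl)
  by_cases hrow : ∃ d ∈ freeCols X (A, B),
      IsNested X a₀ μ (insert x P) (setRowCol M x (rad ∘ ξ)) (insert x A, insert d B)
  · obtain ⟨d, -, hd⟩ := hrow
    refine (hd.best_lastPotential_le hxY hx (hwork ▸ work_insert_row_le hxY)).trans ?_
    rw [pow_zero, sub_self, zero_mul]
    exact ind_nonneg _
  · rw [ind_of_true hrow]
    exact best_lastPotential_le_one

/-- A new row `x` from `Y` uses up, with probability at least one half, a prescribed free column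
outside `Y`. If there is no such column, a missing row is absorbed with probability about one half.
All free columns fail with probability at most `2 ^ (-|X|)`. -/
lemma last_step (hμ : 0 ≤ μ) (hXP : X ⊆ P) (hxY : x ∈ Y) (hx : x ∉ P)
    {t : Option (Finset (Fin n) × Finset (Fin n))} (h : IsNestedOrNone X a₀ μ P M t) :
    𝔼 ξ : Fin n → Bool, best (IsNestedOrNone X a₀ μ (insert x P) (setRowCol M x (rad ∘ ξ)))
      (lastPotential X Y (insert x P)) ≤ lastPotential X Y P t + (1 / 2) ^ X.card := by
  match t, h with
  | none, _ =>
    refine (expect_le_expect fun ξ _ => best_lastPotential_le_one).trans ?_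
    rw [Fintype.expect_const, lastPotential]
    exact le_add_of_nonneg_right (by positivity)
  | some (A, B), h =>
    rw [isNestedOrNone_some] at h
    rcases (freeCols X (A, B) \ Y).eq_empty_or_nonempty with hfree | ⟨d, hd⟩
    · rcases (missing X P (A, B)).eq_empty_or_nonempty with hmissing | ⟨c, hc⟩
      · have hwork : work X Y P (A, B) = 0 := by simp [work, hfree, hmissing]
        exact (h.last_step_of_work_eq_zero hμ hXP hxY hx hwork).trans
          (le_add_of_nonneg_left (lastPotential_nonneg _))
      · exact h.last_step_of_missing hμ hXP hxY hx hfree hc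
    · exact h.last_step_of_free hμ hXP hxY hx hd

lemma IsNested.rows_eq_compl (h : IsNested X a₀ μ univ M s) (hs : missing X univ s = ∅) :
    s.1 = Xᶜ := by
  rw [compl_eq_univ_sdiff]
  exact h.1.1.antisymm (sdiff_eq_empty_iff_subset.1 hs)

lemma IsNested.exists_heavy (h : IsNested X a₀ μ univ M s) (hwork : work X Y univ s = 0) :
    ∃ B : Finset (Fin n), B.card = n - X.card ∧ Yᶜ ⊆ B ∧ μ / 2 ^ n ≤ |permOn M Xᶜ B| := by
  simp only [work, Nat.add_eq_zero_iff, mul_eq_zero, card_eq_zero, OfNat.ofNat_ne_zero,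
    false_or] at hwork
  obtain ⟨hmissing, hfree⟩ := hwork
  have hA := h.rows_eq_compl hmissing
  refine ⟨s.2, ?_, ?_, ?_⟩
  · rw [← h.1.2.2.1, hA, card_compl, Fintype.card_fin]
  · rw [freeCols, hA, union_comm, union_compl, sdiff_eq_empty_iff_subset,
      ← compl_eq_univ_sdiff] at hfree
    exact compl_le_iff_compl_le.1 hfree
  · simpa [hA] using h.1.2.2.2.2

lemma half_le_lastPotential_univ {t : Option (Finset (Fin n) × Finset (Fin n))}
    (h : IsNestedOrNone X a₀ μ univ M t)
    (hbad : ¬∃ B : Finset (Fin n), B.card = n - X.card ∧ Yᶜ ⊆ B ∧ μ / 2 ^ n ≤ |permOn M Xᶜ B|) :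
    1 / 2 ≤ lastPotential X Y univ t := by
  cases t with
  | none => norm_num [lastPotential]
  | some s =>
    have hwork : work X Y univ s ≠ 0 := fun h0 =>
      hbad ((isNestedOrNone_some.1 h).exists_heavy h0)
    have := pow_le_pow_right₀ (by norm_num : (1 : ℝ) ≤ 3 / 2) (Nat.one_le_iff_ne_zero.2 hwork)
    rw [lastPotential, sdiff_eq_empty_iff_subset.2 (subset_univ Y), card_empty, pow_zero, mul_one]
    linarith

lemma IsNested.lastPotential_le (h : IsNested X a₀ μ P M s) (hdisj : Disjoint P Y) :
    lastPotential X Y P (some s) ≤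
      (3 / 2) ^ X.card * (5 / 6) ^ Y.card * (9 / 4) ^ (missing X P s).card := by
  have hwork : work X Y P s ≤ 2 * (missing X P s).card + X.card :=
    Nat.add_le_add_left ((card_le_card sdiff_subset).trans_eq h.card_freeCols) _
  rw [lastPotential, sdiff_eq_self_of_disjoint hdisj.symm]
  calc ((3 / 2 : ℝ) ^ work X Y P s - 1) * (5 / 6) ^ Y.card
      ≤ (3 / 2) ^ (2 * (missing X P s).card + X.card) * (5 / 6) ^ Y.card := by
        gcongr
        exact (sub_le_self _ zero_le_one).trans (pow_le_pow_right₀ (by norm_num) hwork)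
    _ = (3 / 2) ^ X.card * (5 / 6) ^ Y.card * (9 / 4) ^ (missing X P s).card := by
        rw [pow_add, pow_mul]
        norm_num
        ring

lemma best_lastPotential_le (hdisj : Disjoint P Y) (h : ∃ s, IsNested X a₀ μ P M s) :
    best (IsNestedOrNone X a₀ μ P M) (lastPotential X Y P) ≤
      (3 / 2) ^ X.card * (5 / 6) ^ Y.card *
        best (IsNested X a₀ μ P M) (fun s => (9 / 4) ^ (missing X P s).card) := by
  obtain ⟨s, hs, hbest⟩ := exists_eq_best (V := fun s => (9 / 4 : ℝ) ^ (missing X P s).card) h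
  rw [← hbest]
  exact (best_le lastPotential_nonneg (isNestedOrNone_some.2 hs)).trans (hs.lastPotential_le hdisj)

/-- Once the rows in `Y` are revealed as well, some nested minor with all rows off `X` has all its
unused columns in `Y`. Here `G` is an event on which a nested minor exists beforehand. -/
lemma last_phase (hμ : 0 ≤ μ) (hXP : X ⊆ P) (hdisj : Disjoint P Y) (huniv : P ∪ Y = univ)
    {G : Matrix (Fin n) (Fin n) ℝ → Prop} (hG : ∀ M, G M → ∃ s, IsNested X a₀ μ P M s) :
    𝔼 ω, ind (¬∃ B : Finset (Fin n), B.card = n - X.card ∧ Yᶜ ⊆ B ∧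
        μ / 2 ^ n ≤ |permOn (symMat n ω) Xᶜ B|) ≤
      2 * (𝔼 ω, ind (¬G (symMat n ω)) + (3 / 2) ^ X.card * (5 / 6) ^ Y.card *
        𝔼 ω, ind (G (symMat n ω)) * best (IsNested X a₀ μ P (symMat n ω))
          (fun s => (9 / 4) ^ (missing X P s).card) + Y.card * (1 / 2) ^ X.card) := by
  have hex (P : Finset (Fin n)) (M : Matrix (Fin n) (Fin n) ℝ) :
      ∃ t, IsNestedOrNone X a₀ μ P M t := ⟨none, isNestedOrNone_none⟩
  have hrun := expect_best_union_le (valid := IsNestedOrNone X a₀ μ) (V := lastPotential X Y)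
    (isNestedOrNone_adapted hμ) hdisj (κ := 1) (b := (1 / 2) ^ X.card) zero_le_one (by positivity)
    fun P' M x t hP hxY hx h => by
      rw [one_mul]
      exact last_step hμ (hXP.trans hP) hxY hx h
  have hmarkov := mul_expect_ind_le_expect_best (valid := IsNestedOrNone X a₀ μ)
    (V := lastPotential X Y) (isNestedOrNone_adapted hμ) hdisj lastPotential_nonneg
    (K := 1 / 2) (good := fun M => ∃ B : Finset (Fin n), B.card = n - X.card ∧ Yᶜ ⊆ B ∧
      μ / 2 ^ n ≤ |permOn M Xᶜ B|) fun M t ht hbad => by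
        rw [huniv] at ht ⊢
        exact half_le_lastPotential_univ ht hbad
  simp only [hex, true_and, ind_of_true trivial, one_mul, one_pow, sum_const, card_range,
    nsmul_eq_mul, mul_one] at hrun hmarkov
  have hstart (M : Matrix (Fin n) (Fin n) ℝ) :
      best (IsNestedOrNone X a₀ μ P M) (lastPotential X Y P) ≤ ind (¬G M) +
        (3 / 2) ^ X.card * (5 / 6) ^ Y.card * (ind (G M) *
          best (IsNested X a₀ μ P M) (fun s => (9 / 4) ^ (missing X P s).card)) := by
    by_cases hc : G M
    · rw [ind_of_false (not_not.2 hc), ind_of_true hc, one_mul, zero_add]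
      exact best_lastPotential_le hdisj (hG M hc)
    · rw [ind_of_true hc, ind_of_false hc, zero_mul, mul_zero, add_zero]
      exact best_lastPotential_le_one
  have := expect_le_expect fun (ω : Fin n → Fin n → Bool) (_ : ω ∈ univ) => hstart (symMat n ω)
  rw [expect_add_distrib, ← mul_expect] at this
  linarith

end last

/-! ### Combining the phases -/

lemma exists_growth_parameters {β : ℝ} (hβ : 1 ≤ β) (K : ℝ) :
    ∃ τ : ℝ, 0 < τ ∧ τ ≤ 1 ∧ ∃ s : ℕ, β * ((23 / 24) ^ s + 24 * τ) ≤ 1 ∧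
      ∃ κ₀ : ℕ, 0 < κ₀ ∧ 1 + 16 * K / τ ≤ κ₀ := by
  have : 0 < β := zero_lt_one.trans_le hβ
  have hτ1 : 1 / (48 * β) ≤ 1 := by
    rw [div_le_one (by positivity)]
    linarith
  obtain ⟨s, hs⟩ := exists_pow_lt_of_lt_one (show (0 : ℝ) < 1 / (2 * β) by positivity)
    (show (23 / 24 : ℝ) < 1 by norm_num)
  obtain ⟨κ₀, hκ₀⟩ := exists_nat_ge (max 1 (1 + 16 * K / (1 / (48 * β))))
  have hκ₀1 : (1 : ℝ) ≤ κ₀ := (le_max_left _ _).trans hκ₀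
  refine ⟨1 / (48 * β), by positivity, hτ1, s, ?_, κ₀, by exact_mod_cast hκ₀1,
    (le_max_right _ _).trans hκ₀⟩
  calc β * ((23 / 24) ^ s + 24 * (1 / (48 * β)))
      ≤ β * (1 / (2 * β) + 24 * (1 / (48 * β))) := by gcongr
    _ = 1 := by
        field_simp
        norm_num

lemma exists_growth_phase {β : ℝ} (hβ : 1 ≤ β) (K : ℝ) :
    ∃ D : ℕ, 0 < D ∧ ∀ {n w N₀ : ℕ} (j : ℕ) {P F : Finset (Fin n)}, Disjoint P F → 0 < w →
      w ≤ P.card → n ≤ K * w → 1 ≤ N₀ → N₀ * D ≤ w →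
      𝔼 ω, ind (¬∃ A ⊆ F, F.card ≤ A.card + j ∧ (N₀ : ℝ) ^ A.card ≤ gam (symMat n ω) (P ∪ F) A) ≤
        2 ^ F.card / β ^ (j + 1) := by
  obtain ⟨τ, hτ, hτ1, s, hs, κ₀, hκ₀, hκ⟩ := exists_growth_parameters hβ K
  refine ⟨2 * κ₀ ^ s, by positivity, fun {n w N₀} j P F hdisj hw hwP hn hN hND =>
    growth_phase hdisj j hw hwP hτ hτ1 (le_trans ?_ hκ) hN (by linarith) hβ hs⟩
  have : (0 : ℝ) < w := by exact_mod_cast hw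
  gcongr 1 + ?_
  rw [div_le_div_iff₀ (by positivity) hτ]
  calc 16 * (n : ℝ) * τ ≤ 16 * (K * w) * τ := by gcongr
    _ = 16 * K * (w * τ) := by ring

section phases
variable {n : ℕ} {X Y P F : Finset (Fin n)} {a₀ : ℕ} {μ : ℝ}

lemma exists_isMinor_of_le_gam {M : Matrix (Fin n) (Fin n) ℝ} {A : Finset (Fin n)} (hμ : 0 < μ)
    (hAX : A ⊆ P \ X) (ha₀ : a₀ ≤ A.card) (h : μ ^ 2 * 2 ^ n ≤ gam M P A) :
    ∃ s, IsMinor X a₀ μ P M s := by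
  have hP : μ ^ 2 * 2 ^ P.card ≤ μ ^ 2 * 2 ^ n := by
    gcongr
    · norm_num
    · simpa using card_le_univ P
  obtain ⟨B, hBP, hAB, hB⟩ := exists_le_abs_permOn M hμ (hP.trans h)
  exact ⟨(A, B), hAX, hBP, hAB, ha₀,
    (div_le_self hμ.le (one_le_pow₀ one_le_two)).trans hB⟩

lemma expect_ind_not_exists_isMinor_le {N₀ j : ℕ} {δ : ℝ} (hXP : X ⊆ P) (hdisj : Disjoint P F)
    (hN : 1 ≤ N₀) (hμ : 0 < μ) (hμN : μ ^ 2 * 2 ^ n ≤ (N₀ : ℝ) ^ (F.card - j))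
    (hgrowth : 𝔼 ω, ind (¬∃ A ⊆ F, F.card ≤ A.card + j ∧
      (N₀ : ℝ) ^ A.card ≤ gam (symMat n ω) (P ∪ F) A) ≤ δ) :
    𝔼 ω, ind (¬∃ s, IsMinor X (F.card - j) μ (P ∪ F) (symMat n ω) s) ≤ δ := by
  refine (expect_le_expect fun ω _ => ind_mono (mt ?_)).trans hgrowth
  rintro ⟨A, hAF, hcard, hgam⟩
  have ha₀ : F.card - j ≤ A.card := Nat.sub_le_iff_le_add.2 hcard
  have hAX : A ⊆ (P ∪ F) \ X := subset_sdiff.2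
    ⟨hAF.trans subset_union_right, (hdisj.mono hXP hAF).symm⟩
  have hpow : (N₀ : ℝ) ^ (F.card - j) ≤ N₀ ^ A.card :=
    pow_le_pow_right₀ (by exact_mod_cast hN) ha₀
  exact exists_isMinor_of_le_gam hμ hAX ha₀ ((hμN.trans hpow).trans hgam)

lemma expect_ind_not_exists_isNested_le {k : ℕ} (hμ : 0 ≤ μ) (hX : X.Nonempty) (hXP : X ⊆ P)
    (hdisj : Disjoint P F) (hk : P.card ≤ X.card + a₀ + k) :
    𝔼 ω, ind (¬∃ s, IsNested X a₀ μ (P ∪ F) (symMat n ω) s) ≤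
      𝔼 ω, ind (¬∃ s, IsMinor X a₀ μ P (symMat n ω) s) + (7 / 8) ^ F.card * 2 ^ k := by
  refine le_trans ?_ (add_le_add_right (cols_phase hμ hX hXP hdisj hk) _)
  rw [← expect_add_distrib]
  refine expect_le_expect fun ω _ => ind_le_add fun h => ?_
  exact (em (∃ s, IsMinor X a₀ μ P (symMat n ω) s)).elim (fun h' => Or.inr ⟨h', h⟩) Or.inl

lemma exists_block {k : ℕ} (hdisj : Disjoint P Y) (h : P.card + k + Y.card ≤ n) :
    ∃ F, F.card = k ∧ Disjoint P F ∧ Disjoint (P ∪ F) Y ∧ (P ∪ F).card = P.card + k := by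
  have hcard : k ≤ (P ∪ Y)ᶜ.card := by
    rw [card_compl, Fintype.card_fin, card_union_of_disjoint hdisj]
    omega
  obtain ⟨F, hF, rfl⟩ := exists_subset_card_eq hcard
  have hPYF : Disjoint (P ∪ Y) F := disjoint_compl_right.mono_right hF
  rw [disjoint_union_left] at hPYF
  exact ⟨F, rfl, hPYF.1, disjoint_union_left.2 ⟨hdisj, hPYF.2.symm⟩,
    card_union_of_disjoint hPYF.1⟩

end phases

/-- The indices are split into `X`, `Y` and blocks of sizes `w`, `f`, `N₂`, `N₃`. -/
lemma exists_four_phases {β : ℝ} (hβ : 1 ≤ β) (K : ℝ) :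
    ∃ D : ℕ, 0 < D ∧ ∀ {n w f N₂ N₃ N₀ j : ℕ} {μ : ℝ} {X Y : Finset (Fin n)}, Disjoint X Y →
      7 ≤ X.card → X.card + Y.card + w + f + N₂ + N₃ = n → 0 < w → n ≤ K * w → 1 ≤ N₀ →
      N₀ * D ≤ w → 0 < μ → μ ^ 2 * 2 ^ n ≤ (N₀ : ℝ) ^ (f - j) →
      𝔼 ω, ind (¬∃ B : Finset (Fin n), B.card = n - X.card ∧ Yᶜ ⊆ B ∧
          μ / 2 ^ n ≤ |permOn (symMat n ω) Xᶜ B|) ≤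
        2 * ((2 ^ n / β ^ (j + 1) + (7 / 8) ^ N₂ * 2 ^ (w + j)) +
          (3 / 2) ^ X.card * (5 / 6) ^ Y.card * ((3 / 4) ^ N₃ * (9 / 4) ^ (w + j + N₂) + 6) +
          Y.card * (1 / 2) ^ X.card) := by
  obtain ⟨D, hD, hgrowth⟩ := exists_growth_phase hβ K
  refine ⟨D, hD, fun {n w f N₂ N₃ N₀ j μ X Y} hXY hX hcard hw hn hN hND hμ hμN => ?_⟩
  obtain ⟨W, -, -, hWY, hW⟩ := exists_block (k := w) hXY (by omega)
  obtain ⟨F₁, rfl, hWF₁, hF₁Y, hF₁⟩ := exists_block (k := f) hWY (by omega)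
  obtain ⟨F₂, rfl, hF₁F₂, hF₂Y, hF₂⟩ := exists_block (k := N₂) hF₁Y (by omega)
  obtain ⟨F₃, rfl, hF₂F₃, hF₃Y, hF₃⟩ := exists_block (k := N₃) hF₂Y (by omega)
  have huniv : X ∪ W ∪ F₁ ∪ F₂ ∪ F₃ ∪ Y = univ := by
    rw [← card_eq_iff_eq_univ, card_union_of_disjoint hF₃Y, Fintype.card_fin]
    omega
  have hXF₁ : X ⊆ X ∪ W ∪ F₁ := subset_union_left.trans subset_union_left
  have hXF₂ : X ⊆ X ∪ W ∪ F₁ ∪ F₂ := hXF₁.trans subset_union_left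
  have hminor := expect_ind_not_exists_isMinor_le (X := X) subset_union_left hWF₁ hN hμ hμN
    (hgrowth j hWF₁ hw (by omega) hn hN hND)
  have hnested := expect_ind_not_exists_isNested_le (a₀ := F₁.card - j) (k := w + j) hμ.le
    (card_pos.1 (by omega)) hXF₁ hF₁F₂ (by omega)
  have hrows := rows_phase (a₀ := F₁.card - j) (k := w + j + F₂.card) hμ.le hXF₂ hX hF₂F₃
    (by omega)
  have hlast := last_phase (G := fun M => ∃ s, IsNested X (F₁.card - j) μ (X ∪ W ∪ F₁ ∪ F₂) M s)
    hμ.le (hXF₂.trans subset_union_left) hF₃Y huniv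
    fun M ⟨s, hs⟩ => ⟨s, (isNested_adapted hμ.le).union hF₂F₃ hs⟩
  have hpow : (2 : ℝ) ^ F₁.card / β ^ (j + 1) ≤ 2 ^ n / β ^ (j + 1) := by
    gcongr
    · norm_num
    · omega
  refine hlast.trans ?_
  gcongr
  linarith

/-! ### Choice of parameters -/

section parameters
open Filter Topology

lemma eventually_error_le_pow : ∀ᶠ L : ℕ in atTop,
    8 * (2 * (1 / 2 : ℝ) ^ L + 7 * (125 / 144) ^ L + 3 * L * (1 / 2) ^ L) ≤ (9 / 10) ^ (L + 1) := by
  have hlim : Tendsto (fun L : ℕ => 16 * (5 / 9 : ℝ) ^ L + 56 * (1250 / 1296 : ℝ) ^ L +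
      24 * (L * (5 / 9 : ℝ) ^ L)) atTop (𝓝 (16 * 0 + 56 * 0 + 24 * 0)) :=
    (((tendsto_pow_atTop_nhds_zero_of_lt_one (by norm_num) (by norm_num)).const_mul 16).add
      ((tendsto_pow_atTop_nhds_zero_of_lt_one (by norm_num) (by norm_num)).const_mul 56)).add
      ((tendsto_self_mul_const_pow_of_lt_one (by norm_num) (by norm_num)).const_mul 24)
  filter_upwards [hlim.eventually_le_const (u := 9 / 10) (by norm_num)] with L hL
  have hhalf : (1 / 2 : ℝ) ^ L = (9 / 10) ^ L * (5 / 9) ^ L := by rw [← mul_pow]; norm_num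
  have hratio : (125 / 144 : ℝ) ^ L = (9 / 10) ^ L * (1250 / 1296) ^ L := by
    rw [← mul_pow]; norm_num
  rw [hhalf, hratio, pow_succ]
  refine le_trans (le_of_eq ?_) (mul_le_mul_of_nonneg_left hL (by positivity))
  ring

lemma pow_floor_log_le_rpow {n : ℕ} (hn : 1 ≤ n) :
    (9 / 10 : ℝ) ^ (⌊Real.log n / 10⌋₊ + 1) ≤ (n : ℝ) ^ (-(1 / 100) : ℝ) := by
  have hfloor := Nat.lt_floor_add_one (Real.log n / 10)
  have hexp : (9 / 10 : ℝ) ≤ Real.exp (-(1 / 10)) :=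
    (by norm_num : (9 / 10 : ℝ) = -(1 / 10) + 1).trans_le (Real.add_one_le_exp _)
  calc (9 / 10 : ℝ) ^ (⌊Real.log n / 10⌋₊ + 1)
      ≤ Real.exp (-(1 / 10)) ^ (⌊Real.log n / 10⌋₊ + 1) := by gcongr
    _ = Real.exp (((⌊Real.log n / 10⌋₊ + 1 : ℕ) : ℝ) * (-(1 / 10))) := (Real.exp_nat_mul _ _).symm
    _ ≤ Real.exp (Real.log n * (-(1 / 100))) := by
        refine Real.exp_le_exp.2 ?_
        push_cast
        linarith
    _ = (n : ℝ) ^ (-(1 / 100) : ℝ) := (Real.rpow_def_of_pos (by exact_mod_cast hn) _).symm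

lemma tendsto_floor_log : Tendsto (fun n : ℕ => ⌊Real.log n / 10⌋₊) atTop atTop :=
  tendsto_nat_floor_atTop.comp
    ((Real.tendsto_log_atTop.comp tendsto_natCast_atTop_atTop).atTop_div_const (by norm_num))

lemma eventually_error_le_rpow : ∀ᶠ n : ℕ in atTop,
    8 * (2 * (1 / 2 : ℝ) ^ ⌊Real.log n / 10⌋₊ + 7 * (125 / 144) ^ ⌊Real.log n / 10⌋₊ +
      3 * ⌊Real.log n / 10⌋₊ * (1 / 2) ^ ⌊Real.log n / 10⌋₊) ≤ (n : ℝ) ^ (-(1 / 100) : ℝ) := by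
  filter_upwards [tendsto_floor_log.eventually eventually_error_le_pow, eventually_ge_atTop 1]
    with n herr hn
  exact herr.trans (pow_floor_log_le_rpow hn)

lemma eventually_floor_log_le (k : ℕ) : ∀ᶠ n : ℕ in atTop, ⌊Real.log n / 10⌋₊ * k ≤ n := by
  have hlog := (Real.isLittleO_log_id_atTop.comp_tendsto
    (tendsto_natCast_atTop_atTop (R := ℝ))).bound (show (0 : ℝ) < 1 / (k + 1) by positivity)
  filter_upwards [hlog] with n hn
  simp only [Function.comp_apply, id_eq, Real.norm_eq_abs, Nat.abs_cast,
    abs_of_nonneg (Real.log_natCast_nonneg n), one_div, inv_mul_eq_div] at hn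
  rw [le_div_iff₀ (by positivity)] at hn
  have hfloor : (⌊Real.log n / 10⌋₊ : ℝ) ≤ Real.log n :=
    (Nat.floor_le (div_nonneg (Real.log_natCast_nonneg n) (by norm_num))).trans
      (div_le_self (Real.log_natCast_nonneg n) (by norm_num))
  have : (⌊Real.log n / 10⌋₊ : ℝ) * k ≤ n :=
    (mul_le_mul hfloor (by linarith) (by positivity) (Real.log_natCast_nonneg n)).trans hn
  exact_mod_cast this

lemma eventually_const_le_rpow {ε : ℝ} (hε : 0 < ε) (C : ℝ) :
    ∀ᶠ n : ℕ in atTop, C ≤ (n : ℝ) ^ ε :=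
  ((tendsto_rpow_atTop hε).comp tendsto_natCast_atTop_atTop).eventually_ge_atTop C

lemma sq_rpow_mul_le_pow {ε C : ℝ} {n N₀ a₀ : ℕ} (hC : 0 < C) (hn : C ≤ n)
    (hbig : 8 * C ^ (1 - ε / 2) ≤ (n : ℝ) ^ (ε / 2)) (hN₀ : n / C ≤ N₀)
    (ha₀ : (1 - ε / 2) * n ≤ a₀) :
    ((n : ℝ) ^ ((1 - ε) * n / 2) * 2 ^ n) ^ 2 * 2 ^ n ≤ (N₀ : ℝ) ^ a₀ := by
  have hn0 : (0 : ℝ) < n := hC.trans_le hn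
  have hsq : ((n : ℝ) ^ ((1 - ε) * n / 2)) ^ 2 = ((n : ℝ) ^ (1 - ε)) ^ n := by
    rw [← Real.rpow_mul_natCast hn0.le, ← Real.rpow_mul_natCast hn0.le]
    congr 1
    push_cast
    ring
  have hbase : 8 * (n : ℝ) ^ (1 - ε) ≤ (n / C) ^ (1 - ε / 2) := by
    rw [Real.div_rpow hn0.le hC.le, le_div_iff₀ (Real.rpow_pos_of_pos hC _)]
    calc 8 * (n : ℝ) ^ (1 - ε) * C ^ (1 - ε / 2) = (8 * C ^ (1 - ε / 2)) * (n : ℝ) ^ (1 - ε) := by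
          ring
      _ ≤ (n : ℝ) ^ (ε / 2) * (n : ℝ) ^ (1 - ε) := by gcongr
      _ = (n : ℝ) ^ (1 - ε / 2) := by
          rw [← Real.rpow_add hn0]
          congr 1
          ring
  calc ((n : ℝ) ^ ((1 - ε) * n / 2) * 2 ^ n) ^ 2 * 2 ^ n
      = (8 * (n : ℝ) ^ (1 - ε)) ^ n := by
        rw [mul_pow, hsq, mul_pow, ← pow_mul, mul_comm n 2, pow_mul, mul_assoc, ← mul_pow, mul_comm]
        norm_num
    _ ≤ ((n / C) ^ (1 - ε / 2)) ^ n := by gcongr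
    _ = (n / C) ^ ((1 - ε / 2) * n) := (Real.rpow_mul_natCast (by positivity) _ _).symm
    _ ≤ (n / C) ^ (a₀ : ℝ) := Real.rpow_le_rpow_of_exponent_le ((one_le_div hC).2 hn) ha₀
    _ = (n / C) ^ a₀ := Real.rpow_natCast _ _
    _ ≤ (N₀ : ℝ) ^ a₀ := by gcongr

lemma pow_div_pow_le_half_pow {n q m L : ℕ} (hn : n ≤ q * (m + 1)) (hL : L ≤ n) :
    (2 : ℝ) ^ n / (8 ^ q) ^ (m + 1) ≤ (1 / 2) ^ L := by
  rw [← pow_mul]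
  calc (2 : ℝ) ^ n / 8 ^ (q * (m + 1)) ≤ 2 ^ n / 8 ^ n := by gcongr; norm_num
    _ = (1 / 4) ^ n := by rw [← div_pow]; norm_num
    _ ≤ (1 / 2) ^ n := by gcongr; norm_num
    _ ≤ (1 / 2) ^ L := pow_le_pow_of_le_one (by norm_num) (by norm_num) hL

/-- The errors of `exists_four_phases` other than `|Y| 2 ^ (-|X|)`, for `w = j = m`, `N₂ = 20 m` and
`N₃ = 63 m`: `20` is chosen so that `(7/8) ^ 20 * 4 < 1 / 2`, and then `63` so that
`(3/4) ^ 63 * (9/4) ^ 22 ≤ 1`. -/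
lemma phase_errors_le {n q m L : ℕ} (hn : n ≤ q * (m + 1)) (hLm : L ≤ m) (hLn : L ≤ n) :
    (2 ^ n / (8 ^ q) ^ (m + 1) + (7 / 8) ^ (20 * m) * 2 ^ (m + m)) +
        (3 / 2) ^ L * (5 / 6) ^ (3 * L) * ((3 / 4) ^ (63 * m) * (9 / 4) ^ (m + m + 20 * m) + 6) ≤
      2 * (1 / 2 : ℝ) ^ L + 7 * (125 / 144) ^ L := by
  have hcols : (7 / 8 : ℝ) ^ (20 * m) * 2 ^ (m + m) ≤ (1 / 2) ^ L := by
    refine le_trans ?_ (pow_le_pow_of_le_one (by norm_num) (by norm_num) hLm)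
    rw [← two_mul, pow_mul, pow_mul, ← mul_pow]
    gcongr
    norm_num
  have hrows : (3 / 4 : ℝ) ^ (63 * m) * (9 / 4) ^ (m + m + 20 * m) ≤ 1 := by
    rw [show m + m + 20 * m = 22 * m by ring, pow_mul, pow_mul, ← mul_pow]
    exact pow_le_one₀ (by positivity) (by norm_num)
  have hratio : (3 / 2 : ℝ) ^ L * (5 / 6) ^ (3 * L) = (125 / 144) ^ L := by
    rw [pow_mul, ← mul_pow]
    norm_num
  have hlast : (125 / 144 : ℝ) ^ L * ((3 / 4) ^ (63 * m) * (9 / 4) ^ (m + m + 20 * m) + 6) ≤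
      7 * (125 / 144) ^ L := by
    rw [mul_comm]
    gcongr
    linarith
  rw [hratio]
  linarith [pow_div_pow_le_half_pow hn hLn]

lemma exists_block_sizes {n q D L : ℕ} (hq : 0 < q) (hD : 0 < D) (hn : q * D ≤ n)
    (hL : L * (4 * q) ≤ n) :
    ∃ m N₀ : ℕ, m * q ≤ n ∧ n ≤ q * (m + 1) ∧ n ≤ 2 * q * m ∧ 4 * L ≤ m ∧ 1 ≤ N₀ ∧ N₀ * D ≤ m ∧
      n ≤ N₀ * (4 * q * D) := by
  have hDm : D ≤ n / q := (Nat.le_div_iff_mul_le hq).2 (by rwa [mul_comm])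
  have hN₀ : 1 ≤ n / q / D := (Nat.one_le_div_iff hD).2 hDm
  have hnq : n ≤ q * (n / q + 1) := (Nat.lt_mul_div_succ n hq).le
  have hmD : n / q ≤ D * (n / q / D + 1) := (Nat.lt_mul_div_succ _ hD).le
  have hn2 : n ≤ 2 * q * (n / q) := by nlinarith
  refine ⟨n / q, n / q / D, Nat.div_mul_le_self n q, hnq, hn2,
    (Nat.le_div_iff_mul_le hq).2 (by linarith), hN₀, Nat.div_mul_le_self _ _, ?_⟩
  calc n ≤ 2 * q * (n / q) := hn2
    _ ≤ 2 * q * (D * (n / q / D + 1)) := by gcongr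
    _ ≤ 2 * q * (D * (n / q / D + n / q / D)) := by gcongr
    _ = n / q / D * (4 * q * D) := by ring

lemma one_sub_mul_le_natCast_sub {ε : ℝ} {n q m f : ℕ} (hε : 0 < ε) (hq : 172 / ε ≤ q)
    (hm : m * q ≤ n) (hf : n ≤ f + 85 * m) : (1 - ε / 2) * n ≤ ((f - m : ℕ) : ℝ) := by
  have hf' : (n : ℝ) ≤ ((f - m : ℕ) : ℝ) + 86 * m := by
    exact_mod_cast (by omega : n ≤ (f - m) + 86 * m)
  have hεm : 172 * (m : ℝ) ≤ ε * n := by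
    calc 172 * (m : ℝ) ≤ ε * (m * q) := by
          rw [div_le_iff₀ hε] at hq
          nlinarith
      _ ≤ ε * n := by
          gcongr
          exact_mod_cast hm
  linarith

lemma eventually_expect_ind_le {ε : ℝ} (hε : 0 < ε) : ∀ᶠ n : ℕ in atTop,
    ∀ X Y : Finset (Fin n), Disjoint X Y →
      X.card = ⌊Real.log n / 10⌋₊ → Y.card = 3 * ⌊Real.log n / 10⌋₊ →
      𝔼 ω, ind (¬∃ B : Finset (Fin n), B.card = n - ⌊Real.log n / 10⌋₊ ∧ Yᶜ ⊆ B ∧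
        (n : ℝ) ^ ((1 - ε) * n / 2) ≤ |permOn (symMat n ω) Xᶜ B|) ≤
      1 / 4 * (n : ℝ) ^ (-(1 / 100) : ℝ) := by
  -- Only `4 L + 85 m ≤ 86 n / q` rows lie outside the minor grown first, and this is to be at most
  -- `ε n / 2`.
  obtain ⟨q, hq⟩ := exists_nat_ge (172 / ε + 172)
  have hqε : 172 / ε ≤ q := by linarith
  have hq172 : 172 ≤ q := by
    have : 0 < 172 / ε := by positivity
    exact_mod_cast (by linarith : (172 : ℝ) ≤ q)
  obtain ⟨D, hD, hphases⟩ := exists_four_phases (β := 8 ^ q) (one_le_pow₀ (by norm_num)) (2 * q)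
  filter_upwards [eventually_error_le_rpow, tendsto_floor_log.eventually_ge_atTop 7,
    eventually_floor_log_le (4 * q), eventually_ge_atTop (4 * q * D),
    eventually_const_le_rpow (half_pos hε) (8 * (4 * q * D : ℕ) ^ (1 - ε / 2))]
    with n herr hL7 hLn hCn hbig X Y hXY hX hY
  obtain ⟨m, N₀, hmq, hnq, hnm, hLm, hN₀, hND, hnN⟩ :=
    exists_block_sizes (by omega) hD (by nlinarith) hLn
  generalize ⌊Real.log n / 10⌋₊ = L at *
  have hm172 : m * 172 ≤ n := (Nat.mul_le_mul_left m hq172).trans hmq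
  obtain ⟨f, hf⟩ : ∃ f, L + 3 * L + m + f + 20 * m + 63 * m = n :=
    ⟨n - (4 * L + 84 * m), by omega⟩
  have hC : (0 : ℝ) < (4 * q * D : ℕ) := by exact_mod_cast (by positivity : 0 < 4 * q * D)
  have hCn' : ((4 * q * D : ℕ) : ℝ) ≤ n := by exact_mod_cast hCn
  have hheavy := sq_rpow_mul_le_pow hC hCn' hbig
    ((div_le_iff₀ hC).2 (by exact_mod_cast hnN))
    (one_sub_mul_le_natCast_sub hε hqε hmq (f := f) (by omega))
  have hfail := hphases hXY (by omega) (hX ▸ hY ▸ hf) (by omega) (by exact_mod_cast hnm) hN₀ hND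
    (by have := hC.trans_le hCn'; positivity) hheavy
  rw [mul_div_cancel_right₀ _ (by positivity), hX, hY] at hfail
  push_cast at hfail
  linarith [phase_errors_le hnq (by omega : L ≤ m) (by omega : L ≤ n)]

end parameters

/-- There is a constant `c > 0` such that for every `ε > 0` the following holds for all `n`
sufficiently large. Let `L = ⌊(log n)/10⌋`, and let `X` and `Y` be disjoint subsets of the
index set with `|X| = L` and `|Y| = 3L`. Then with probability at least `1 - (1/4)·n^(-c)`
there is a set `B` with `|B| = n - L` and `Yᶜ ⊆ B` such that `M_n[Xᶜ, B]` is
`n^((1-ε)n/2)`-heavy. -/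
theorem grow_single_minor :
    ∃ c : ℝ, 0 < c ∧ ∀ ε : ℝ, 0 < ε → ∃ n₀ : ℕ, ∀ n : ℕ, n₀ ≤ n →
      ∀ X Y : Finset (Fin n), Disjoint X Y →
        X.card = ⌊Real.log n / 10⌋₊ → Y.card = 3 * ⌊Real.log n / 10⌋₊ →
        1 - (1 / 4) * (n : ℝ) ^ (-c) ≤
          prob n fun M => ∃ B : Finset (Fin n),
            B.card = n - ⌊Real.log n / 10⌋₊ ∧ Yᶜ ⊆ B ∧
            (n : ℝ) ^ ((1 - ε) * n / 2) ≤ |permOn M Xᶜ B| := by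
  refine ⟨1 / 100, by norm_num, fun ε hε => ?_⟩
  obtain ⟨n₀, hn₀⟩ := Filter.eventually_atTop.1 (eventually_expect_ind_le hε)
  refine ⟨n₀, fun n hn X Y hXY hX hY => ?_⟩
  rw [sub_le_comm, one_sub_prob]
  exact hn₀ n hn X Y hXY hX hY
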